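/- The following six integrals all equal [Γ(1/4)]⁸ / (128 π²): ∫_0^1 [K(√(1−k²))]³ dk, (10/3) ∫_0^1 [K(k)]³ dk, 5 ∫_0^1 [K(k)]³ k dk, 3 ∫_0^1 [K(k)]² K(√(1−k²)) dk, 2 ∫_0^1 K(k) [K(√(1−k²))]² dk, and 6 ∫_0^1 [K(k)]² K(√(1−k²)) k dk. -/

import Mathlib

open Real MeasureTheory intervalIntegral Filter Topology

/-- Complete elliptic integral of the first kind. -/
noncomputable def ellipticK (k : ℝ) : ℝ :=
  ∫ θ in (0:ℝ)..(π/2), 1 / Real.sqrt (1 - k^2 * Real.sin θ ^ 2)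

/-!
Write `K' k = K √(1 - k²)`. Landen's transformation `k ↦ (1 - k) / (1 + k)` and the substitution
`k ↦ √(1 - k²)` give linear relations between the moments `∫ K ^ a * K' ^ b * k ^ c` with
`a + b = 3`. Two further inputs determine all of them.

* `∫ K' ^ 3 = Γ(1/4) ^ 8 / (128 π²)`: let `Φ z = ∫ db / (|z - b| |i - b|)` over the real line. The
  integral of `y ^ (-1/2) Φ(z) ^ 2` over the upper half-plane is evaluated in two ways. Expanding
  the square and integrating over `z` first reduces it to the fourth power of a beta integral. On
  the other hand `Φ` is a Landen-transformed `K'`, and polar coordinates in suitable variables turn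
  the integral into `64 ∫ K' ^ 3`.
* `∫ K' ^ 3 = 3 ∫ K ^ 2 * K'`: Cauchy's theorem for `K' ^ 3` on the first quadrant. It is real on
  the positive real axis, and on the imaginary axis the boundary value of `K'` at `κ i` is, up to
  the factor `1 / √(1 + κ²)`, `K' - i K` at the modulus `κ / √(1 + κ²)`.
-/

noncomputable section

open Set
open scoped ENNReal

section ChangeOfVariables

variable {φ φ' : ℝ → ℝ} {s t : Set ℝ}

theorem setLIntegral_eq_of_bijOn (hs : MeasurableSet s) (hφ : BijOn φ s t)
    (hφ' : ∀ x ∈ s, HasDerivAt φ (φ' x) x) (f : ℝ → ℝ≥0∞) :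
    ∫⁻ y in t, f y = ∫⁻ x in s, ENNReal.ofReal |φ' x| * f (φ x) := by
  rw [← hφ.image_eq, lintegral_image_eq_lintegral_abs_deriv_mul hs
    (fun x hx => (hφ' x hx).hasDerivWithinAt) hφ.injOn]

theorem setIntegral_eq_of_bijOn {E : Type*} [NormedAddCommGroup E] [NormedSpace ℝ E]
    (hs : MeasurableSet s) (hφ : BijOn φ s t) (hφ' : ∀ x ∈ s, HasDerivAt φ (φ' x) x) (f : ℝ → E) :
    ∫ y in t, f y = ∫ x in s, |φ' x| • f (φ x) := by
  rw [← hφ.image_eq, integral_image_eq_integral_abs_deriv_smul hs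
    (fun x hx => (hφ' x hx).hasDerivWithinAt) hφ.injOn]

theorem integrableOn_iff_of_bijOn {E : Type*} [NormedAddCommGroup E] [NormedSpace ℝ E]
    (hs : MeasurableSet s) (hφ : BijOn φ s t) (hφ' : ∀ x ∈ s, HasDerivAt φ (φ' x) x) {f : ℝ → E} :
    IntegrableOn f t ↔ IntegrableOn (fun x => |φ' x| • f (φ x)) s := by
  rw [← hφ.image_eq, integrableOn_image_iff_integrableOn_abs_deriv_smul hs
    (fun x hx => (hφ' x hx).hasDerivWithinAt) hφ.injOn]

theorem bijOn_tan_Ioo_zero : BijOn tan (Ioo 0 (π / 2)) (Ioi 0) := by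
  refine InvOn.bijOn (f' := arctan) ⟨fun x hx => arctan_tan (by linarith [hx.1, pi_pos]) hx.2,
    fun y _ => tan_arctan y⟩ (fun x hx => tan_pos_of_pos_of_lt_pi_div_two hx.1 hx.2)
    fun y hy => ⟨arctan_pos.2 hy, arctan_lt_pi_div_two y⟩

theorem bijOn_half_sub_inv : BijOn (fun s : ℝ => (s - s⁻¹) / 2) (Ioi 0) univ := by
  have sinh_log_eq : EqOn (fun s => sinh (log s)) (fun s : ℝ => (s - s⁻¹) / 2) (Ioi 0) :=
    fun s hs => sinh_log hs
  refine BijOn.congr (InvOn.bijOn (f' := fun u => exp (arsinh u))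
    ⟨fun s hs => ?_, fun u _ => ?_⟩ (mapsTo_univ _ _) fun u _ => exp_pos _) sinh_log_eq
  · simp only [arsinh_sinh, exp_log hs]
  · simp only [log_exp, sinh_arsinh]

theorem hasDerivAt_half_sub_inv {s : ℝ} (hs : s ≠ 0) :
    HasDerivAt (fun s : ℝ => (s - s⁻¹) / 2) ((1 + 1 / s ^ 2) / 2) s :=
  (((hasDerivAt_id s).sub (hasDerivAt_inv hs)).div_const 2).congr_deriv (by ring)

theorem bijOn_one_sub_div_one_add :
    BijOn (fun k : ℝ => (1 - k) / (1 + k)) (Ioo 0 1) (Ioo 0 1) := by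
  have mapsTo : MapsTo (fun k : ℝ => (1 - k) / (1 + k)) (Ioo 0 1) (Ioo 0 1) := fun k hk =>
    ⟨div_pos (by linarith [hk.2]) (by linarith [hk.1]),
      (div_lt_one (by linarith [hk.1])).2 (by linarith [hk.1])⟩
  have leftInv : LeftInvOn (fun k : ℝ => (1 - k) / (1 + k)) (fun k : ℝ => (1 - k) / (1 + k))
      (Ioo 0 1) := fun k hk => by
    have : 1 + k ≠ 0 := by linarith [hk.1]
    simp only
    field_simp
    ring
  exact InvOn.bijOn ⟨leftInv, leftInv⟩ mapsTo mapsTo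

theorem hasDerivAt_one_sub_div_one_add {k : ℝ} (hk : 1 + k ≠ 0) :
    HasDerivAt (fun k : ℝ => (1 - k) / (1 + k)) (-(2 / (1 + k) ^ 2)) k :=
  (((hasDerivAt_id k).const_sub 1).div ((hasDerivAt_id k).const_add 1) hk).congr_deriv
    (by simp only [id]; ring)

theorem sqrt_one_sub_sq_mem_Ioo {k : ℝ} (hk : k ∈ Ioo (0 : ℝ) 1) :
    √(1 - k ^ 2) ∈ Ioo (0 : ℝ) 1 :=
  ⟨sqrt_pos.2 (by nlinarith [hk.1, hk.2]),
    (sqrt_lt' one_pos).2 (by nlinarith [hk.1])⟩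

theorem sqrt_one_sub_sq_sqrt_one_sub_sq {k : ℝ} (hk : k ∈ Ioo (0 : ℝ) 1) :
    √(1 - √(1 - k ^ 2) ^ 2) = k := by
  rw [sq_sqrt (by nlinarith [hk.1, hk.2]), sub_sub_cancel, sqrt_sq hk.1.le]

theorem bijOn_sqrt_one_sub_sq : BijOn (fun k : ℝ => √(1 - k ^ 2)) (Ioo 0 1) (Ioo 0 1) :=
  InvOn.bijOn ⟨fun _ => sqrt_one_sub_sq_sqrt_one_sub_sq, fun _ => sqrt_one_sub_sq_sqrt_one_sub_sq⟩
    (fun _ => sqrt_one_sub_sq_mem_Ioo) fun _ => sqrt_one_sub_sq_mem_Ioo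

theorem hasDerivAt_sqrt_one_sub_sq {k : ℝ} (hk : 1 - k ^ 2 ≠ 0) :
    HasDerivAt (fun k : ℝ => √(1 - k ^ 2)) (-(k / √(1 - k ^ 2))) k :=
  ((((hasDerivAt_id k).pow 2).const_sub 1).sqrt hk).congr_deriv (by
    simp only [id, Pi.pow_apply, Nat.cast_ofNat]
    ring)

end ChangeOfVariables

/-! ### The complementary integral and Landen's transformation -/

/-- The complementary complete elliptic integral `K'(c) = K(√(1 - c²))` in algebraic form, as an
improper integral over the half-line that makes sense for all `c > 0`. -/
def complEllipticK (c : ℝ) : ℝ :=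
  ∫ t in Ioi (0 : ℝ), 1 / √((1 + t ^ 2) * (1 + c ^ 2 * t ^ 2))

theorem complEllipticK_nonneg (c : ℝ) : 0 ≤ complEllipticK c :=
  integral_nonneg fun t => by positivity

theorem measurable_complEllipticK : Measurable complEllipticK := by
  have integrand : Measurable fun p : ℝ × ℝ => 1 / √((1 + p.2 ^ 2) * (1 + p.1 ^ 2 * p.2 ^ 2)) := by
    fun_prop
  exact (integrand.stronglyMeasurable.integral_prod_right'
    (ν := volume.restrict (Ioi 0))).measurable

theorem integrable_one_div_sqrt_one_add_sq_mul {c : ℝ} (hc : c ≠ 0) :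
    Integrable fun t : ℝ => 1 / √((1 + t ^ 2) * (1 + c ^ 2 * t ^ 2)) := by
  have min_pos : 0 < min 1 (c ^ 2) := lt_min one_pos (by positivity)
  refine (integrable_inv_one_add_sq.const_mul (1 / √(min 1 (c ^ 2)))).mono'
    (Measurable.aestronglyMeasurable (by fun_prop)) (Eventually.of_forall fun t => ?_)
  have min_le : min 1 (c ^ 2) * (1 + t ^ 2) ≤ 1 + c ^ 2 * t ^ 2 := by
    nlinarith [sq_nonneg t, min_le_left 1 (c ^ 2), min_le_right 1 (c ^ 2)]
  have lower : √(min 1 (c ^ 2)) * (1 + t ^ 2) ≤ √((1 + t ^ 2) * (1 + c ^ 2 * t ^ 2)) := by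
    refine le_sqrt_of_sq_le ?_
    rw [mul_pow, sq_sqrt min_pos.le]
    nlinarith [sq_nonneg t]
  rw [norm_of_nonneg (by positivity)]
  calc 1 / √((1 + t ^ 2) * (1 + c ^ 2 * t ^ 2))
      ≤ 1 / (√(min 1 (c ^ 2)) * (1 + t ^ 2)) := one_div_le_one_div_of_le (by positivity) lower
    _ = 1 / √(min 1 (c ^ 2)) * (1 + t ^ 2)⁻¹ := by field_simp

theorem ellipticK_eq_complEllipticK {k c : ℝ} (h : k ^ 2 = 1 - c ^ 2) :
    ellipticK k = complEllipticK c := by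
  have cos_pos : ∀ θ ∈ Ioo 0 (π / 2), 0 < cos θ := fun θ hθ =>
    cos_pos_of_mem_Ioo ⟨by linarith [hθ.1, pi_pos], hθ.2⟩
  unfold ellipticK complEllipticK
  rw [intervalIntegral.integral_of_le (by positivity), integral_Ioc_eq_integral_Ioo,
    setIntegral_eq_of_bijOn measurableSet_Ioo bijOn_tan_Ioo_zero
      fun θ hθ => hasDerivAt_tan (cos_pos θ hθ).ne']
  refine setIntegral_congr_fun measurableSet_Ioo fun θ hθ => ?_
  have hcos := cos_pos θ hθ
  have factor : (1 + tan θ ^ 2) * (1 + c ^ 2 * tan θ ^ 2)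
      = (1 - k ^ 2 * sin θ ^ 2) / (cos θ ^ 2) ^ 2 := by
    rw [h, tan_eq_sin_div_cos]
    field_simp
    rw [cos_sq']
    ring
  simp only [smul_eq_mul]
  rw [abs_of_pos (by positivity), factor, sqrt_div' _ (by positivity), sqrt_sq (by positivity),
    one_div_div, ← mul_div_assoc, one_div_mul_cancel (pow_ne_zero _ hcos.ne')]

theorem integral_Ioi_one_div_sqrt_quartic_eq_mul_complEllipticK {c : ℝ} (hc : 0 < c) :
    ∫ s in Ioi (0 : ℝ), 1 / √(s ^ 4 + (4 / c ^ 2 - 2) * s ^ 2 + 1) = c * complEllipticK c := by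
  have two_mul_complEllipticK :
      2 * complEllipticK c = ∫ u : ℝ, 1 / √((1 + u ^ 2) * (1 + c ^ 2 * u ^ 2)) := by
    have even := integral_comp_abs (f := fun u : ℝ => 1 / √((1 + u ^ 2) * (1 + c ^ 2 * u ^ 2)))
    simp only [sq_abs] at even
    exact even.symm
  suffices ∫ s in Ioi (0 : ℝ), 1 / √(s ^ 4 + (4 / c ^ 2 - 2) * s ^ 2 + 1)
      = c / 2 * (2 * complEllipticK c) by rw [this]; ring
  have substituted := setIntegral_eq_of_bijOn measurableSet_Ioi bijOn_half_sub_inv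
    (fun s hs => hasDerivAt_half_sub_inv (ne_of_gt hs))
    fun u => 1 / √((1 + u ^ 2) * (1 + c ^ 2 * u ^ 2))
  rw [setIntegral_univ] at substituted
  rw [two_mul_complEllipticK, substituted, ← MeasureTheory.integral_const_mul]
  refine setIntegral_congr_fun measurableSet_Ioi fun s (hs : 0 < s) => ?_
  have factor : (1 + ((s - s⁻¹) / 2) ^ 2) * (1 + c ^ 2 * ((s - s⁻¹) / 2) ^ 2)
      = ((1 + 1 / s ^ 2) / 2 * (c / 2)) ^ 2 * (s ^ 4 + (4 / c ^ 2 - 2) * s ^ 2 + 1) := by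
    field_simp
    ring
  simp only [smul_eq_mul]
  rw [abs_of_pos (by positivity), factor, sqrt_mul (by positivity), sqrt_sq (by positivity)]
  field_simp

theorem integral_Ioi_one_div_sqrt_quartic_eq_sqrt_mul_complEllipticK {m : ℝ} (hm : 0 < m) :
    ∫ s in Ioi (0 : ℝ), 1 / √(s ^ 4 + (m + 1 / m) * s ^ 2 + 1) = √m * complEllipticK m := by
  have scaling := integral_comp_mul_left_Ioi
    (fun s : ℝ => 1 / √(s ^ 4 + (m + 1 / m) * s ^ 2 + 1)) 0 (sqrt_pos.2 hm)
  rw [mul_zero, smul_eq_mul] at scaling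
  have scaled : complEllipticK m = ∫ x in Ioi (0 : ℝ),
      1 / √((√m * x) ^ 4 + (m + 1 / m) * (√m * x) ^ 2 + 1) := by
    refine setIntegral_congr_fun measurableSet_Ioi fun s _ => ?_
    have sqrt_pow_four : √m ^ 4 = m ^ 2 := by rw [show √m ^ 4 = (√m ^ 2) ^ 2 by ring, sq_sqrt hm.le]
    simp only [mul_pow, sq_sqrt hm.le, sqrt_pow_four]
    congr 2
    field_simp
    ring
  rw [scaled, scaling, ← mul_assoc, mul_inv_cancel₀ (sqrt_pos.2 hm).ne', one_mul]

theorem complEllipticK_landen {k : ℝ} (hk : k ∈ Ioo (0 : ℝ) 1) :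
    complEllipticK ((1 - k) / (1 + k)) = (1 + k) * complEllipticK √(1 - k ^ 2) := by
  obtain ⟨h0, h1⟩ := hk
  have m_pos : 0 < (1 - k) / (1 + k) := div_pos (by linarith) (by linarith)
  have c_sq_pos : 0 < 1 - k ^ 2 := by nlinarith
  have coeff_eq : 4 / √(1 - k ^ 2) ^ 2 - 2 = (1 - k) / (1 + k) + 1 / ((1 - k) / (1 + k)) := by
    rw [sq_sqrt c_sq_pos.le, show 1 - k ^ 2 = (1 - k) * (1 + k) by ring]
    field_simp
    ring
  have sqrt_eq : √(1 - k ^ 2) = (1 + k) * √((1 - k) / (1 + k)) := by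
    rw [show 1 - k ^ 2 = (1 + k) ^ 2 * ((1 - k) / (1 + k)) by field_simp; ring,
      sqrt_mul (by positivity), sqrt_sq (by positivity)]
  have quartic := integral_Ioi_one_div_sqrt_quartic_eq_mul_complEllipticK (sqrt_pos.2 c_sq_pos)
  rw [coeff_eq, integral_Ioi_one_div_sqrt_quartic_eq_sqrt_mul_complEllipticK m_pos] at quartic
  refine mul_left_cancel₀ (sqrt_pos.2 m_pos).ne' ?_
  rw [quartic, ← mul_assoc, mul_comm √((1 - k) / (1 + k)) (1 + k), ← sqrt_eq]

theorem complEllipticK_sqrt_landen {k : ℝ} (hk : k ∈ Ioo (0 : ℝ) 1) :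
    complEllipticK √(1 - ((1 - k) / (1 + k)) ^ 2) = (1 + k) / 2 * complEllipticK k := by
  have one_add_pos : 0 < 1 + k := by linarith [hk.1]
  have landen := complEllipticK_landen (bijOn_one_sub_div_one_add.mapsTo hk)
  have involutive : (1 - (1 - k) / (1 + k)) / (1 + (1 - k) / (1 + k)) = k := by
    field_simp
    ring
  have one_add_eq : 1 + (1 - k) / (1 + k) = 2 / (1 + k) := by
    field_simp
    ring
  rw [involutive, one_add_eq] at landen
  rw [landen]
  field_simp

/-! ### Lebesgue integrals of inverse square roots -/

theorem setLIntegral_eq_ofReal_mul_comp_mul_left {s : Set ℝ} (hs : MeasurableSet s) {a : ℝ}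
    (ha : 0 < a) (has : BijOn (fun x => a * x) s s) (f : ℝ → ℝ≥0∞) :
    ∫⁻ x in s, f x = ENNReal.ofReal a * ∫⁻ x in s, f (a * x) := by
  rw [setLIntegral_eq_of_bijOn hs has fun x _ => hasDerivAt_const_mul a, abs_of_pos ha,
    lintegral_const_mul' _ _ ENNReal.ofReal_ne_top]

theorem lintegral_Ioi_eq_ofReal_mul_comp_mul_left {a : ℝ} (ha : 0 < a) (f : ℝ → ℝ≥0∞) :
    ∫⁻ x in Ioi 0, f x = ENNReal.ofReal a * ∫⁻ x in Ioi 0, f (a * x) :=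
  setLIntegral_eq_ofReal_mul_comp_mul_left measurableSet_Ioi ha
    (InvOn.bijOn (f' := fun x => a⁻¹ * x)
      ⟨fun x _ => inv_mul_cancel_left₀ ha.ne' x, fun x _ => mul_inv_cancel_left₀ ha.ne' x⟩
      (fun _ hx => mul_pos ha hx) fun _ hx => mul_pos (inv_pos.2 ha) hx) f

theorem lintegral_eq_ofReal_mul_comp_mul_left {a : ℝ} (ha : 0 < a) (f : ℝ → ℝ≥0∞) :
    ∫⁻ x, f x = ENNReal.ofReal a * ∫⁻ x, f (a * x) := by
  simpa only [setLIntegral_univ] using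
    setLIntegral_eq_ofReal_mul_comp_mul_left MeasurableSet.univ ha
      (bijOn_univ.2 (mulLeft_bijective₀ a ha.ne')) f

theorem lintegral_comp_abs (f : ℝ → ℝ≥0∞) : ∫⁻ x, f |x| = 2 * ∫⁻ x in Ioi (0 : ℝ), f x := by
  have pos_part : ∫⁻ x in Ioi (0 : ℝ), f |x| = ∫⁻ x in Ioi (0 : ℝ), f x :=
    setLIntegral_congr_fun measurableSet_Ioi fun x hx => by rw [abs_of_pos hx]
  have neg_part : ∫⁻ x in Iic (0 : ℝ), f |x| = ∫⁻ x in Ioi (0 : ℝ), f x := by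
    have bijOn_neg : BijOn (fun x : ℝ => -x) (Ioi 0) (Iio 0) :=
      InvOn.bijOn (f' := fun x => -x) ⟨fun x _ => neg_neg x, fun x _ => neg_neg x⟩
        (fun x (hx : 0 < x) => neg_lt_zero.2 hx) fun x (hx : x < 0) => neg_pos.2 hx
    rw [setLIntegral_congr Iio_ae_eq_Iic.symm, setLIntegral_eq_of_bijOn measurableSet_Ioi bijOn_neg
      fun x _ => hasDerivAt_neg x, ← pos_part]
    simp only [abs_neg, abs_one, ENNReal.ofReal_one, one_mul]
  rw [← lintegral_add_compl _ (measurableSet_Ioi (a := (0 : ℝ))), compl_Ioi, pos_part, neg_part,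
    two_mul]

/-- The function `1 / √x` as an extended nonnegative real, the form in which inverse square roots
enter the applications of Tonelli's theorem. -/
def invSqrt (x : ℝ) : ℝ≥0∞ := ENNReal.ofReal (1 / √x)

theorem invSqrt_ne_top (x : ℝ) : invSqrt x ≠ ∞ := ENNReal.ofReal_ne_top

@[fun_prop]
theorem measurable_invSqrt : Measurable invSqrt := by unfold invSqrt; fun_prop

theorem invSqrt_mul {x : ℝ} (hx : 0 ≤ x) (y : ℝ) : invSqrt (x * y) = invSqrt x * invSqrt y := by
  rw [invSqrt, invSqrt, invSqrt, ← ENNReal.ofReal_mul (by positivity), one_div_mul_one_div,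
    sqrt_mul hx]

theorem invSqrt_sq {x : ℝ} (hx : 0 ≤ x) : invSqrt (x ^ 2) = ENNReal.ofReal (1 / x) := by
  rw [invSqrt, sqrt_sq hx]

theorem ofReal_mul_invSqrt_sq_mul {x : ℝ} (hx : 0 < x) (y : ℝ) :
    ENNReal.ofReal x * invSqrt (x ^ 2 * y) = invSqrt y := by
  rw [invSqrt_mul (sq_nonneg x), invSqrt_sq hx.le, ← mul_assoc, ← ENNReal.ofReal_mul hx.le,
    mul_one_div_cancel hx.ne', ENNReal.ofReal_one, one_mul]

theorem lintegral_Ioi_one_div_one_add_sq :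
    ∫⁻ x in Ioi (0 : ℝ), ENNReal.ofReal (1 / (1 + x ^ 2)) = ENNReal.ofReal (π / 2) := by
  have h := integral_Ioi_inv_one_add_sq (i := 0)
  rw [arctan_zero, sub_zero] at h
  rw [← h, ofReal_integral_eq_lintegral_ofReal integrable_inv_one_add_sq.integrableOn
    (Eventually.of_forall fun x => by positivity)]
  simp only [one_div]

theorem lintegral_Ioi_one_div_add_mul_sq {a b : ℝ} (ha : 0 < a) (hb : 0 < b) :
    ∫⁻ s in Ioi (0 : ℝ), ENNReal.ofReal (1 / (b + a * s ^ 2))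
      = ENNReal.ofReal (π / 2) * invSqrt (a * b) := by
  have scaled (s : ℝ) : ENNReal.ofReal (1 / (b + a * (√(b / a) * s) ^ 2))
      = ENNReal.ofReal (1 / b) * ENNReal.ofReal (1 / (1 + s ^ 2)) := by
    rw [← ENNReal.ofReal_mul (by positivity), mul_pow, sq_sqrt (by positivity)]
    congr 1
    field_simp
  have sqrt_div_eq : √(b / a) = b / √(a * b) := by
    rw [show b / a = b ^ 2 / (a * b) by field_simp, sqrt_div (sq_nonneg b), sqrt_sq hb.le]
  rw [lintegral_Ioi_eq_ofReal_mul_comp_mul_left (sqrt_pos.2 (div_pos hb ha))]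
  simp_rw [scaled]
  rw [lintegral_const_mul' _ _ ENNReal.ofReal_ne_top, lintegral_Ioi_one_div_one_add_sq, invSqrt,
    ← ENNReal.ofReal_mul (by positivity), ← ENNReal.ofReal_mul (by positivity),
    ← ENNReal.ofReal_mul (by positivity), sqrt_div_eq]
  congr 1
  field_simp

theorem lintegral_one_div_add_mul_sub_sq {a b : ℝ} (ha : 0 < a) (hb : 0 < b) (c : ℝ) :
    ∫⁻ x : ℝ, ENNReal.ofReal (1 / (b + a * (x - c) ^ 2)) = ENNReal.ofReal π * invSqrt (a * b) := by
  rw [lintegral_sub_right_eq_self (fun x => ENNReal.ofReal (1 / (b + a * x ^ 2))) c]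
  have even := lintegral_comp_abs fun x => ENNReal.ofReal (1 / (b + a * x ^ 2))
  simp only [sq_abs] at even
  rw [even, lintegral_Ioi_one_div_add_mul_sq ha hb, ← mul_assoc, ← ENNReal.ofReal_ofNat,
    ← ENNReal.ofReal_mul zero_le_two, mul_div_cancel₀ _ two_ne_zero]

-- Feynman's trick `1 / √(A B) = (2 / π) ∫ ds / (B + A s²)` makes the integrand rational in `x`.
theorem lintegral_invSqrt_mul_eq_lintegral_Ioi (b₁ b₂ : ℝ) {y₁ y₂ : ℝ} (h₁ : 0 < y₁) (h₂ : 0 < y₂) :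
    ∫⁻ x : ℝ, invSqrt (((x - b₁) ^ 2 + y₁ ^ 2) * ((x - b₂) ^ 2 + y₂ ^ 2))
      = 2 * ∫⁻ s in Ioi (0 : ℝ),
          invSqrt (s ^ 2 * (b₁ - b₂) ^ 2 + (1 + s ^ 2) * (s ^ 2 * y₁ ^ 2 + y₂ ^ 2)) := by
  have two_div_pi_mul : ENNReal.ofReal (2 / π) * ENNReal.ofReal (π / 2) = 1 := by
    rw [← ENNReal.ofReal_mul (by positivity), div_mul_div_cancel₀ pi_ne_zero, div_self two_ne_zero,
      ENNReal.ofReal_one]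
  have feynman (x : ℝ) : invSqrt (((x - b₁) ^ 2 + y₁ ^ 2) * ((x - b₂) ^ 2 + y₂ ^ 2))
      = ENNReal.ofReal (2 / π) * ∫⁻ s in Ioi (0 : ℝ),
          ENNReal.ofReal (1 / (((x - b₂) ^ 2 + y₂ ^ 2) + ((x - b₁) ^ 2 + y₁ ^ 2) * s ^ 2)) := by
    rw [lintegral_Ioi_one_div_add_mul_sq (by positivity) (by positivity), ← mul_assoc,
      two_div_pi_mul, one_mul]
  have complete_square (s x : ℝ) :
      ((x - b₂) ^ 2 + y₂ ^ 2) + ((x - b₁) ^ 2 + y₁ ^ 2) * s ^ 2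
        = (s ^ 2 * (b₁ - b₂) ^ 2 / (1 + s ^ 2) + s ^ 2 * y₁ ^ 2 + y₂ ^ 2)
          + (1 + s ^ 2) * (x - (s ^ 2 * b₁ + b₂) / (1 + s ^ 2)) ^ 2 := by
    have : 1 + s ^ 2 ≠ 0 := by positivity
    field_simp
    ring
  have discriminant (s : ℝ) :
      (1 + s ^ 2) * (s ^ 2 * (b₁ - b₂) ^ 2 / (1 + s ^ 2) + s ^ 2 * y₁ ^ 2 + y₂ ^ 2)
        = s ^ 2 * (b₁ - b₂) ^ 2 + (1 + s ^ 2) * (s ^ 2 * y₁ ^ 2 + y₂ ^ 2) := by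
    have : 1 + s ^ 2 ≠ 0 := by positivity
    field_simp
    ring
  simp_rw [feynman]
  rw [lintegral_const_mul' _ _ ENNReal.ofReal_ne_top, lintegral_lintegral_swap (by fun_prop)]
  simp_rw [complete_square]
  have inner (s : ℝ) := lintegral_one_div_add_mul_sub_sq (a := 1 + s ^ 2) (by positivity)
    (b := s ^ 2 * (b₁ - b₂) ^ 2 / (1 + s ^ 2) + s ^ 2 * y₁ ^ 2 + y₂ ^ 2) (by positivity)
    ((s ^ 2 * b₁ + b₂) / (1 + s ^ 2))
  simp_rw [inner, discriminant]
  rw [lintegral_const_mul' _ _ ENNReal.ofReal_ne_top, ← mul_assoc,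
    ← ENNReal.ofReal_mul (by positivity), div_mul_cancel₀ _ pi_ne_zero, ENNReal.ofReal_ofNat]

theorem lintegral_Ioo_rpow_mul_one_sub_rpow {a b : ℝ} (ha : 0 < a) (hb : 0 < b) :
    ∫⁻ x in Ioo (0 : ℝ) 1, ENNReal.ofReal (x ^ (a - 1) * (1 - x) ^ (b - 1))
      = ENNReal.ofReal (ProbabilityTheory.beta a b) := by
  have beta_pos := ProbabilityTheory.beta_pos ha hb
  have total := ProbabilityTheory.lintegral_betaPDF_eq_one ha hb
  simp_rw [ProbabilityTheory.lintegral_betaPDF, mul_assoc,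
    ENNReal.ofReal_mul (one_div_pos.2 beta_pos).le] at total
  rw [lintegral_const_mul' _ _ ENNReal.ofReal_ne_top] at total
  rw [← mul_one (ENNReal.ofReal (ProbabilityTheory.beta a b)), ← total, ← mul_assoc,
    ← ENNReal.ofReal_mul beta_pos.le, mul_one_div_cancel beta_pos.ne', ENNReal.ofReal_one, one_mul]

theorem bijOn_sq_div_one_add_sq : BijOn (fun u : ℝ => u ^ 2 / (1 + u ^ 2)) (Ioi 0) (Ioo 0 1) := by
  refine InvOn.bijOn (f' := fun x => √(x / (1 - x))) ⟨fun u (hu : 0 < u) => ?_, fun x hx => ?_⟩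
    (fun u (hu : 0 < u) => ⟨by positivity, (div_lt_one (by positivity)).2 (by linarith)⟩)
    fun x hx => sqrt_pos.2 (div_pos hx.1 (sub_pos.2 hx.2))
  · simp only
    rw [show u ^ 2 / (1 + u ^ 2) / (1 - u ^ 2 / (1 + u ^ 2)) = u ^ 2 by field_simp; ring,
      sqrt_sq hu.le]
  · have : 0 < 1 - x := sub_pos.2 hx.2
    simp only
    rw [sq_sqrt (div_nonneg hx.1.le this.le)]
    field_simp
    ring

theorem hasDerivAt_sq_div_one_add_sq (u : ℝ) :
    HasDerivAt (fun u : ℝ => u ^ 2 / (1 + u ^ 2)) (2 * u / (1 + u ^ 2) ^ 2) u :=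
  ((hasDerivAt_pow 2 u).div ((hasDerivAt_pow 2 u).const_add 1) (by positivity)).congr_deriv (by
    push_cast
    ring)

theorem lintegral_Ioi_rpow_div_one_add_sq_rpow {a b : ℝ} (ha : 0 < a) (hb : 0 < b) :
    ∫⁻ u in Ioi (0 : ℝ), ENNReal.ofReal (u ^ (2 * a - 1) / (1 + u ^ 2) ^ (a + b))
      = ENNReal.ofReal (ProbabilityTheory.beta a b / 2) := by
  have integrand : ∀ u ∈ Ioi (0 : ℝ), ENNReal.ofReal |2 * u / (1 + u ^ 2) ^ 2| * ENNReal.ofReal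
        ((u ^ 2 / (1 + u ^ 2)) ^ (a - 1) * (1 - u ^ 2 / (1 + u ^ 2)) ^ (b - 1))
      = ENNReal.ofReal 2 * ENNReal.ofReal (u ^ (2 * a - 1) / (1 + u ^ 2) ^ (a + b)) := by
    intro u (hu : 0 < u)
    have hq : 0 < 1 + u ^ 2 := by positivity
    have one_sub_eq : 1 - u ^ 2 / (1 + u ^ 2) = 1 / (1 + u ^ 2) := by
      field_simp
      ring
    have pow_u : u ^ (2 * a - 1) = (u ^ 2) ^ (a - 1) * u := by
      rw [← rpow_natCast, ← rpow_mul hu.le, ← rpow_add_one hu.ne']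
      congr 1
      push_cast
      ring
    have pow_q : (1 + u ^ 2) ^ (a + b)
        = (1 + u ^ 2) ^ (a - 1) * (1 + u ^ 2) ^ (b - 1) * (1 + u ^ 2) ^ 2 := by
      rw [← rpow_natCast (1 + u ^ 2) 2, ← rpow_add hq, ← rpow_add hq]
      congr 1
      push_cast
      ring
    rw [abs_of_pos (by positivity), ← ENNReal.ofReal_mul (by positivity),
      ← ENNReal.ofReal_mul (by positivity), one_sub_eq, div_rpow (by positivity) hq.le,
      div_rpow zero_le_one hq.le, one_rpow, pow_u, pow_q]
    congr 1
    field_simp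
  have substituted := lintegral_Ioo_rpow_mul_one_sub_rpow ha hb
  rw [setLIntegral_eq_of_bijOn measurableSet_Ioi bijOn_sq_div_one_add_sq
    fun u _ => hasDerivAt_sq_div_one_add_sq u, setLIntegral_congr_fun measurableSet_Ioi integrand,
    lintegral_const_mul' _ _ ENNReal.ofReal_ne_top] at substituted
  rw [ENNReal.ofReal_div_of_pos two_pos, ← substituted, mul_div_assoc,
    ENNReal.mul_div_cancel (by simp) (by simp)]

/-- The lemniscatic integral `∫₀^∞ du / √(u (1 + u²))`. -/
def lemniscateIntegral : ℝ≥0∞ := ∫⁻ u in Ioi (0 : ℝ), invSqrt (u * (1 + u ^ 2))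

theorem lemniscateIntegral_eq :
    lemniscateIntegral = ENNReal.ofReal (Gamma (1 / 4) ^ 2 / (2 * √π)) := by
  have beta_eq : ProbabilityTheory.beta (1 / 4) (1 / 4) / 2 = Gamma (1 / 4) ^ 2 / (2 * √π) := by
    rw [ProbabilityTheory.beta, show (1 / 4 + 1 / 4 : ℝ) = 1 / 2 by norm_num, Gamma_one_half_eq]
    ring
  rw [← beta_eq, ← lintegral_Ioi_rpow_div_one_add_sq_rpow (by norm_num) (by norm_num)]
  refine setLIntegral_congr_fun measurableSet_Ioi fun u (hu : 0 < u) => ?_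
  rw [invSqrt, show (2 * (1 / 4) - 1 : ℝ) = -(1 / 2) by norm_num,
    show (1 / 4 + 1 / 4 : ℝ) = 1 / 2 by norm_num, rpow_neg hu.le, ← sqrt_eq_rpow, ← sqrt_eq_rpow,
    sqrt_mul hu.le]
  congr 1
  field_simp

theorem lemniscateIntegral_ne_top : lemniscateIntegral ≠ ∞ := by
  rw [lemniscateIntegral_eq]
  exact ENNReal.ofReal_ne_top

theorem lintegral_Ioi_invSqrt_mul_add_sq {a b : ℝ} (ha : 0 < a) (hb : 0 < b) :
    ∫⁻ y in Ioi (0 : ℝ), invSqrt (y * (a ^ 2 + b ^ 2 * y ^ 2))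
      = invSqrt (a * b) * lemniscateIntegral := by
  rw [lintegral_Ioi_eq_ofReal_mul_comp_mul_left (div_pos ha hb), lemniscateIntegral,
    ← lintegral_const_mul' _ _ (invSqrt_ne_top _), ← lintegral_const_mul' _ _ ENNReal.ofReal_ne_top]
  refine setLIntegral_congr_fun measurableSet_Ioi fun u (hu : 0 < u) => ?_
  rw [← invSqrt_mul (by positivity), ← ofReal_mul_invSqrt_sq_mul (div_pos ha hb) (a * b * _)]
  congr 2
  field_simp

/-! ### The third moment of `K'` as an integral over the half-plane -/

/-- The potential at `x + i y` of the boundary charge with density `1 / |i - b|`: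
`∫ db / (|x + i y - b| |i - b|)`. -/
def boundaryPotential (x y : ℝ) : ℝ≥0∞ := ∫⁻ b, invSqrt ((x - b) ^ 2 + y ^ 2) * invSqrt (b ^ 2 + 1)

/-- The half-plane integral `∬ y^(-1/2) Φ(x + i y)² dx dy` of the squared boundary potential `Φ`.
Points of the half-plane are encoded as pairs `(y, x)`. -/
def halfPlaneIntegral : ℝ≥0∞ :=
  ∫⁻ z : ℝ × ℝ, invSqrt z.1 * boundaryPotential z.2 z.1 ^ 2 ∂(volume.restrict (Ioi 0)).prod volume

theorem lintegral_halfPlane_invSqrt_mul_invSqrt {b₁ b₂ : ℝ} (h : b₁ ≠ b₂) :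
    ∫⁻ y in Ioi (0 : ℝ), ∫⁻ x,
        invSqrt y * (invSqrt ((x - b₁) ^ 2 + y ^ 2) * invSqrt ((x - b₂) ^ 2 + y ^ 2))
      = 2 * lemniscateIntegral ^ 2 * invSqrt |b₁ - b₂| := by
  have dist_pos : 0 < |b₁ - b₂| := abs_pos.2 (sub_ne_zero.2 h)
  have x_integral : ∀ y ∈ Ioi (0 : ℝ), ∫⁻ x,
        invSqrt y * (invSqrt ((x - b₁) ^ 2 + y ^ 2) * invSqrt ((x - b₂) ^ 2 + y ^ 2))
      = 2 * ∫⁻ s in Ioi (0 : ℝ), invSqrt (y * ((s * |b₁ - b₂|) ^ 2 + (1 + s ^ 2) ^ 2 * y ^ 2)) := by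
    intro y (hy : 0 < y)
    have combine (x : ℝ) : invSqrt ((x - b₁) ^ 2 + y ^ 2) * invSqrt ((x - b₂) ^ 2 + y ^ 2)
        = invSqrt (((x - b₁) ^ 2 + y ^ 2) * ((x - b₂) ^ 2 + y ^ 2)) :=
      (invSqrt_mul (by positivity) _).symm
    simp_rw [combine]
    rw [lintegral_const_mul' _ _ (invSqrt_ne_top _),
      lintegral_invSqrt_mul_eq_lintegral_Ioi _ _ hy hy, mul_left_comm,
      ← lintegral_const_mul' _ _ (invSqrt_ne_top _)]
    congr 2 with s
    rw [← invSqrt_mul hy.le, mul_pow, sq_abs]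
    congr 1
    ring
  have y_integral : ∀ s ∈ Ioi (0 : ℝ),
      ∫⁻ y in Ioi (0 : ℝ), invSqrt (y * ((s * |b₁ - b₂|) ^ 2 + (1 + s ^ 2) ^ 2 * y ^ 2))
        = invSqrt |b₁ - b₂| * lemniscateIntegral * invSqrt (s * (1 + s ^ 2)) := by
    intro s (hs : 0 < s)
    rw [lintegral_Ioi_invSqrt_mul_add_sq (by positivity) (by positivity), mul_comm s, mul_assoc,
      invSqrt_mul dist_pos.le]
    ring
  rw [setLIntegral_congr_fun measurableSet_Ioi x_integral,
    lintegral_const_mul' _ _ ENNReal.ofNat_ne_top, lintegral_lintegral_swap (by fun_prop),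
    setLIntegral_congr_fun measurableSet_Ioi y_integral,
    lintegral_const_mul' _ _ (ENNReal.mul_ne_top (invSqrt_ne_top _) lemniscateIntegral_ne_top),
    ← lemniscateIntegral]
  ring

theorem lintegral_invSqrt_mul_invSqrt_translate (u : ℝ) :
    ∫⁻ b, invSqrt (b ^ 2 + 1) * invSqrt ((b + u) ^ 2 + 1) * invSqrt |u|
      = 2 * ∫⁻ s in Ioi (0 : ℝ), invSqrt (|u| * ((1 + s ^ 2) ^ 2 + s ^ 2 * |u| ^ 2)) := by
  have combine (b : ℝ) : invSqrt (b ^ 2 + 1) * invSqrt ((b + u) ^ 2 + 1)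
      = invSqrt (((b - 0) ^ 2 + 1 ^ 2) * ((b - -u) ^ 2 + 1 ^ 2)) := by
    rw [← invSqrt_mul (by positivity), sub_zero, sub_neg_eq_add, one_pow]
  simp_rw [combine]
  rw [lintegral_mul_const' _ _ (invSqrt_ne_top _),
    lintegral_invSqrt_mul_eq_lintegral_Ioi _ _ one_pos one_pos, mul_assoc,
    ← lintegral_mul_const' _ _ (invSqrt_ne_top _)]
  congr 2 with s
  rw [mul_comm, ← invSqrt_mul (abs_nonneg u), sq_abs]
  congr 1
  ring

theorem lintegral_lintegral_boundary_pair :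
    ∫⁻ b₁ : ℝ, ∫⁻ b₂ : ℝ, invSqrt (b₁ ^ 2 + 1) * invSqrt (b₂ ^ 2 + 1) * invSqrt |b₁ - b₂|
      = 4 * lemniscateIntegral ^ 2 := by
  have translate (b₁ : ℝ) :
      ∫⁻ b₂ : ℝ, invSqrt (b₁ ^ 2 + 1) * invSqrt (b₂ ^ 2 + 1) * invSqrt |b₁ - b₂|
        = ∫⁻ u : ℝ, invSqrt (b₁ ^ 2 + 1) * invSqrt ((b₁ + u) ^ 2 + 1) * invSqrt |u| := by
    rw [← lintegral_add_left_eq_self _ b₁]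
    simp only [sub_add_cancel_left, abs_neg]
  have u_integral : ∀ s ∈ Ioi (0 : ℝ),
      ∫⁻ u in Ioi (0 : ℝ), invSqrt (u * ((1 + s ^ 2) ^ 2 + s ^ 2 * u ^ 2))
        = lemniscateIntegral * invSqrt (s * (1 + s ^ 2)) := by
    intro s (hs : 0 < s)
    rw [lintegral_Ioi_invSqrt_mul_add_sq (by positivity) hs, mul_comm, mul_comm s]
  simp_rw [translate]
  rw [lintegral_lintegral_swap (by fun_prop)]
  simp_rw [lintegral_invSqrt_mul_invSqrt_translate]
  rw [lintegral_const_mul' _ _ ENNReal.ofNat_ne_top,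
    lintegral_comp_abs fun u =>
      ∫⁻ s in Ioi (0 : ℝ), invSqrt (u * ((1 + s ^ 2) ^ 2 + s ^ 2 * u ^ 2)),
    lintegral_lintegral_swap (by fun_prop), setLIntegral_congr_fun measurableSet_Ioi u_integral,
    lintegral_const_mul' _ _ lemniscateIntegral_ne_top, ← lemniscateIntegral]
  ring

theorem boundaryPotential_sq (x y : ℝ) :
    boundaryPotential x y ^ 2 = ∫⁻ b : ℝ × ℝ, invSqrt (b.1 ^ 2 + 1) * invSqrt (b.2 ^ 2 + 1)
      * (invSqrt ((x - b.1) ^ 2 + y ^ 2) * invSqrt ((x - b.2) ^ 2 + y ^ 2)) := by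
  rw [sq, boundaryPotential, ← lintegral_prod_mul (by fun_prop) (by fun_prop),
    ← Measure.volume_eq_prod]
  congr 1 with b
  ring

theorem ae_prod_fst_ne_snd {α : Type*} [MeasurableSpace α] [MeasurableEq α] (μ ν : Measure α)
    [SFinite ν] [NullSingletonClass ν] : ∀ᵐ b ∂μ.prod ν, b.1 ≠ b.2 := by
  refine (Measure.ae_prod_mem_iff_ae_ae_mem
    (measurableSet_eq_fun measurable_fst measurable_snd).compl).2 (Eventually.of_forall fun x => ?_)
  filter_upwards [Measure.ae_ne ν x] with y hy using hy.symm

theorem halfPlaneIntegral_eq_lemniscateIntegral_pow :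
    halfPlaneIntegral = 8 * lemniscateIntegral ^ 4 := by
  have integrand (z : ℝ × ℝ) : invSqrt z.1 * boundaryPotential z.2 z.1 ^ 2
      = ∫⁻ b : ℝ × ℝ, invSqrt (b.1 ^ 2 + 1) * invSqrt (b.2 ^ 2 + 1) * (invSqrt z.1 *
          (invSqrt ((z.2 - b.1) ^ 2 + z.1 ^ 2) * invSqrt ((z.2 - b.2) ^ 2 + z.1 ^ 2))) := by
    rw [boundaryPotential_sq, ← lintegral_const_mul' _ _ (invSqrt_ne_top _)]
    congr 1 with b
    ring
  have half_plane (b : ℝ × ℝ) (hb : b.1 ≠ b.2) :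
      ∫⁻ z : ℝ × ℝ, invSqrt (b.1 ^ 2 + 1) * invSqrt (b.2 ^ 2 + 1) * (invSqrt z.1 *
          (invSqrt ((z.2 - b.1) ^ 2 + z.1 ^ 2) * invSqrt ((z.2 - b.2) ^ 2 + z.1 ^ 2)))
            ∂(volume.restrict (Ioi 0)).prod volume
        = 2 * lemniscateIntegral ^ 2
          * (invSqrt (b.1 ^ 2 + 1) * invSqrt (b.2 ^ 2 + 1) * invSqrt |b.1 - b.2|) := by
    rw [lintegral_const_mul' _ _ (ENNReal.mul_ne_top (invSqrt_ne_top _) (invSqrt_ne_top _)),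
      lintegral_prod _ (by fun_prop), lintegral_halfPlane_invSqrt_mul_invSqrt hb]
    ring
  simp_rw [halfPlaneIntegral, integrand]
  rw [lintegral_lintegral_swap (by fun_prop), Measure.volume_eq_prod,
    lintegral_congr_ae ((ae_prod_fst_ne_snd volume volume).mono half_plane),
    lintegral_const_mul' _ _
      (ENNReal.mul_ne_top ENNReal.ofNat_ne_top (ENNReal.pow_ne_top lemniscateIntegral_ne_top)),
    lintegral_prod _ (by fun_prop), lintegral_lintegral_boundary_pair]
  ring

/-- The function `r ↦ 1 / √(1 + r²) = cos (arctan r)`, through which a slope or a radius `r > 0`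
parametrises a modulus in `(0, 1)`. -/
def cosArctan (r : ℝ) : ℝ := 1 / √(1 + r ^ 2)

theorem cosArctan_pos (r : ℝ) : 0 < cosArctan r := by unfold cosArctan; positivity

theorem cosArctan_sq (r : ℝ) : cosArctan r ^ 2 = 1 / (1 + r ^ 2) := by
  rw [cosArctan, div_pow, sq_sqrt (by positivity), one_pow]

theorem mul_cosArctan_sq (r : ℝ) : (r * cosArctan r) ^ 2 = 1 - cosArctan r ^ 2 := by
  rw [mul_pow, cosArctan_sq]
  field_simp
  ring

theorem hasDerivAt_cosArctan (r : ℝ) : HasDerivAt cosArctan (-(r * cosArctan r ^ 3)) r := by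
  have radicand_pos : 0 < 1 + r ^ 2 := by positivity
  have := ((((hasDerivAt_id r).pow 2).const_add 1).sqrt radicand_pos.ne').inv
    (sqrt_pos.2 radicand_pos).ne'
  refine (this.congr_deriv ?_).congr_of_eventuallyEq (Eventually.of_forall fun x => one_div _)
  simp only [id, Pi.pow_apply, cosArctan, Nat.cast_ofNat, Nat.add_one_sub_one, pow_one]
  field_simp

theorem bijOn_cosArctan : BijOn cosArctan (Ioi 0) (Ioo 0 1) := by
  refine InvOn.bijOn (f' := fun c => √(1 / c ^ 2 - 1)) ⟨fun r hr => ?_, fun c hc => ?_⟩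
    (fun r (hr : 0 < r) => ⟨cosArctan_pos r, ?_⟩) fun c hc => sqrt_pos.2 ?_
  · simp only [cosArctan_sq, one_div_one_div, add_sub_cancel_left, sqrt_sq (le_of_lt hr)]
  · have : 1 ≤ 1 / c ^ 2 := one_le_one_div (pow_pos hc.1 2) (pow_le_one₀ hc.1.le hc.2.le)
    rw [cosArctan, sq_sqrt (sub_nonneg.2 this), add_sub_cancel, sqrt_div zero_le_one, sqrt_one,
      sqrt_sq hc.1.le, one_div_one_div]
  · exact (div_lt_one (by positivity)).2 (lt_sqrt_of_sq_lt (by nlinarith))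
  · exact sub_pos.2 (one_lt_one_div (pow_pos hc.1 2) (pow_lt_one₀ hc.1.le hc.2 two_ne_zero))

/-- The value `w^(-1/2) K'(w^(-1/2))` by which the boundary potential depends on the invariant
`w = |z + i|² / (4 Im z)`. -/
def potentialProfile (w : ℝ) : ℝ≥0∞ :=
  ENNReal.ofReal (1 / √w * complEllipticK (1 / √w))

@[fun_prop]
theorem measurable_potentialProfile : Measurable potentialProfile := by
  have := measurable_complEllipticK
  unfold potentialProfile
  fun_prop

theorem potentialProfile_one_add_sq (r : ℝ) : potentialProfile (1 + r ^ 2)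
    = ENNReal.ofReal (cosArctan r * complEllipticK (cosArctan r)) := rfl

theorem lintegral_Ioi_invSqrt_quartic {w : ℝ} (hw : 1 ≤ w) :
    ∫⁻ s in Ioi (0 : ℝ), invSqrt (s ^ 4 + (4 * w - 2) * s ^ 2 + 1) = potentialProfile w := by
  have w_pos : 0 < w := one_pos.trans_le hw
  have four_div_sq : 4 / (1 / √w) ^ 2 = 4 * w := by
    rw [div_pow, sq_sqrt w_pos.le, one_pow, div_div_eq_mul_div, div_one]
  have integrable : Integrable fun s : ℝ => 1 / √(s ^ 4 + (4 * w - 2) * s ^ 2 + 1) := by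
    refine integrable_inv_one_add_sq.mono' (Measurable.aestronglyMeasurable (by fun_prop))
      (Eventually.of_forall fun s => ?_)
    rw [norm_of_nonneg (by positivity), one_div]
    exact inv_anti₀ (by positivity) (le_sqrt_of_sq_le (by nlinarith [sq_nonneg s]))
  rw [potentialProfile,
    ← integral_Ioi_one_div_sqrt_quartic_eq_mul_complEllipticK (by positivity), four_div_sq,
    ofReal_integral_eq_lintegral_ofReal integrable.integrableOn
      (Eventually.of_forall fun s => by positivity)]
  rfl

theorem boundaryPotential_eq_potentialProfile (x : ℝ) {y : ℝ} (hy : 0 < y) :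
    boundaryPotential x y
      = 2 * (invSqrt y * potentialProfile ((x ^ 2 + (1 + y) ^ 2) / (4 * y))) := by
  set w := (x ^ 2 + (1 + y) ^ 2) / (4 * y) with w_def
  have one_le_w : 1 ≤ w :=
    (one_le_div (by positivity)).2 (by nlinarith [sq_nonneg x, sq_nonneg (1 - y)])
  have combine (b : ℝ) : invSqrt ((x - b) ^ 2 + y ^ 2) * invSqrt (b ^ 2 + 1)
      = invSqrt (((b - x) ^ 2 + y ^ 2) * ((b - 0) ^ 2 + 1 ^ 2)) := by
    rw [← invSqrt_mul (by positivity)]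
    congr 1
    ring
  simp_rw [boundaryPotential, combine]
  rw [lintegral_invSqrt_mul_eq_lintegral_Ioi _ _ hy one_pos,
    lintegral_Ioi_eq_ofReal_mul_comp_mul_left (one_div_pos.2 (sqrt_pos.2 hy)), ← invSqrt,
    ← lintegral_Ioi_invSqrt_quartic one_le_w]
  congr 3 with s
  congr 1
  rw [mul_pow, div_pow, sq_sqrt hy.le, w_def]
  field_simp
  ring

theorem halfPlaneIntegral_eq_lintegral_Ioi : halfPlaneIntegral = ∫⁻ y in Ioi (0 : ℝ),
    ENNReal.ofReal (8 / y) * ∫⁻ p, potentialProfile (p ^ 2 + (1 + y) ^ 2 / (4 * y)) ^ 2 := by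
  have measurable_potential : Measurable fun z : ℝ × ℝ => boundaryPotential z.2 z.1 :=
    Measurable.lintegral_prod_right' (f := fun p : (ℝ × ℝ) × ℝ =>
      invSqrt ((p.1.2 - p.2) ^ 2 + p.1.1 ^ 2) * invSqrt (p.2 ^ 2 + 1)) (by fun_prop)
  rw [halfPlaneIntegral, lintegral_prod _ (by fun_prop)]
  refine setLIntegral_congr_fun measurableSet_Ioi fun y (hy : 0 < y) => ?_
  have integrand (x : ℝ) : invSqrt y * boundaryPotential x y ^ 2 = ENNReal.ofReal (4 / (y * √y))
      * potentialProfile ((x ^ 2 + (1 + y) ^ 2) / (4 * y)) ^ 2 := by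
    have const_eq : invSqrt y * (2 * invSqrt y) ^ 2 = ENNReal.ofReal (4 / (y * √y)) := by
      rw [mul_pow, sq (invSqrt y), ← invSqrt_mul hy.le, ← sq, invSqrt_sq hy.le, invSqrt,
        mul_left_comm, ← ENNReal.ofReal_mul (by positivity), ← ENNReal.ofReal_ofNat,
        ← ENNReal.ofReal_pow zero_le_two, ← ENNReal.ofReal_mul (by positivity)]
      congr 1
      field_simp
      norm_num
    rw [boundaryPotential_eq_potentialProfile x hy, ← const_eq]
    ring
  have rescale (p : ℝ) : ((2 * √y * p) ^ 2 + (1 + y) ^ 2) / (4 * y)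
      = p ^ 2 + (1 + y) ^ 2 / (4 * y) := by
    rw [mul_pow, mul_pow, sq_sqrt hy.le]
    field_simp
    ring
  simp_rw [integrand]
  rw [lintegral_const_mul' _ _ ENNReal.ofReal_ne_top,
    lintegral_eq_ofReal_mul_comp_mul_left (show 0 < 2 * √y by positivity), ← mul_assoc,
    ← ENNReal.ofReal_mul (by positivity)]
  simp_rw [rescale]
  congr 2
  field_simp
  norm_num

theorem bijOn_sq_Ioi_zero : BijOn (fun s : ℝ => s ^ 2) (Ioi 0) (Ioi 0) :=
  InvOn.bijOn (f' := sqrt) ⟨fun _ hs => sqrt_sq (le_of_lt hs), fun _ hy => sq_sqrt (le_of_lt hy)⟩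
    (fun _ hs => pow_pos (mem_Ioi.1 hs) 2) fun _ hy => sqrt_pos.2 hy

-- With `y = s²` and `v = (s - 1/s) / 2` one has `(1 + y)² / (4 y) = ((s + 1/s) / 2)² = 1 + v²`.
theorem halfPlaneIntegral_eq_lintegral_plane : halfPlaneIntegral = ∫⁻ z : ℝ × ℝ,
    ENNReal.ofReal (16 / √(1 + z.2 ^ 2)) * potentialProfile (z.1 ^ 2 + (1 + z.2 ^ 2)) ^ 2 := by
  rw [Measure.volume_eq_prod, lintegral_prod_symm _ (by fun_prop),
    halfPlaneIntegral_eq_lintegral_Ioi, setLIntegral_eq_of_bijOn measurableSet_Ioi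
      bijOn_sq_Ioi_zero fun s _ => hasDerivAt_pow 2 s]
  simp_rw [lintegral_const_mul' _ _ ENNReal.ofReal_ne_top]
  have substituted := setLIntegral_eq_of_bijOn measurableSet_Ioi bijOn_half_sub_inv
    (fun s hs => hasDerivAt_half_sub_inv (ne_of_gt hs)) fun v =>
      ENNReal.ofReal (16 / √(1 + v ^ 2)) * ∫⁻ p, potentialProfile (p ^ 2 + (1 + v ^ 2)) ^ 2
  rw [setLIntegral_univ] at substituted
  rw [substituted]
  refine setLIntegral_congr_fun measurableSet_Ioi fun s (hs : 0 < s) => ?_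
  have one_add_sq_eq : 1 + ((s - s⁻¹) / 2) ^ 2 = ((s + s⁻¹) / 2) ^ 2 := by
    field_simp
    ring
  have invariant_eq : (1 + s ^ 2) ^ 2 / (4 * s ^ 2) = ((s + s⁻¹) / 2) ^ 2 := by
    field_simp
    ring
  simp only [one_add_sq_eq, invariant_eq]
  rw [sqrt_sq (by positivity), abs_of_pos (by positivity), abs_of_pos (by positivity), ← mul_assoc,
    ← mul_assoc, ← ENNReal.ofReal_mul (by positivity), ← ENNReal.ofReal_mul (by positivity)]
  congr 2
  push_cast
  field_simp
  ring

theorem integral_neg_pi_pi_eq_four_mul {f : ℝ → ℝ} (hf : Continuous f) (even : ∀ θ, f (-θ) = f θ)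
    (reflect : ∀ θ, f (π - θ) = f θ) : ∫ θ in -π..π, f θ = 4 * ∫ θ in (0 : ℝ)..π / 2, f θ := by
  have left_half : ∫ θ in -π..0, f θ = ∫ θ in (0 : ℝ)..π, f θ := by
    have h := intervalIntegral.integral_comp_neg (a := 0) (b := π) f
    simp only [even, neg_zero] at h
    exact h.symm
  have second_quarter : ∫ θ in π / 2..π, f θ = ∫ θ in (0 : ℝ)..π / 2, f θ := by
    have h := intervalIntegral.integral_comp_sub_left (a := 0) (b := π / 2) f π
    simp only [reflect, sub_zero, sub_half] at h
    exact h.symm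
  have hi (a b : ℝ) : IntervalIntegrable f volume a b := hf.intervalIntegrable a b
  rw [← integral_add_adjacent_intervals (hi (-π) 0) (hi 0 π), left_half,
    ← integral_add_adjacent_intervals (hi 0 (π / 2)) (hi (π / 2) π), second_quarter]
  ring

theorem integral_one_div_sqrt_one_add_mul_sin_sq (r : ℝ) :
    ∫ θ in (0 : ℝ)..π / 2, 1 / √(1 + (r * sin θ) ^ 2)
      = cosArctan r * complEllipticK (cosArctan r) := by
  have h := intervalIntegral.integral_comp_sub_left (a := 0) (b := π / 2)
    (fun θ => 1 / √(1 + (r * sin θ) ^ 2)) (π / 2)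
  rw [sub_zero, sub_self] at h
  rw [← h, ← ellipticK_eq_complEllipticK (mul_cosArctan_sq r), ellipticK,
    ← intervalIntegral.integral_const_mul]
  refine intervalIntegral.integral_congr fun θ _ => ?_
  have radicand : 1 + (r * cos θ) ^ 2
      = (1 + r ^ 2) * (1 - (r * cosArctan r) ^ 2 * sin θ ^ 2) := by
    rw [mul_cosArctan_sq, cosArctan_sq, mul_pow, cos_sq']
    field_simp
    ring
  simp only [sin_pi_div_two_sub]
  rw [radicand, sqrt_mul (by positivity), cosArctan, one_div_mul_one_div]

theorem lintegral_angle (r : ℝ) :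
    ∫⁻ θ in Ioo (-π) π, ENNReal.ofReal (16 / √(1 + (r * sin θ) ^ 2))
      = ENNReal.ofReal (64 * (cosArctan r * complEllipticK (cosArctan r))) := by
  have continuous_integrand : Continuous fun θ : ℝ => 1 / √(1 + (r * sin θ) ^ 2) :=
    continuous_const.div (by fun_prop) fun θ => (sqrt_pos.2 (by positivity)).ne'
  have full_circle := integral_neg_pi_pi_eq_four_mul continuous_integrand
    (fun θ => by simp only [sin_neg, mul_neg, neg_sq]) fun θ => by simp only [sin_pi_sub]
  rw [intervalIntegral.integral_of_le (by linarith [pi_pos]), integral_Ioc_eq_integral_Ioo,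
    integral_one_div_sqrt_one_add_mul_sin_sq] at full_circle
  rw [show (64 : ℝ) = 16 * 4 by norm_num, mul_assoc, ← full_circle,
    ← MeasureTheory.integral_const_mul, ofReal_integral_eq_lintegral_ofReal]
  · simp only [mul_one_div]
  · exact ((continuous_integrand.const_mul 16).integrableOn_Icc).mono_set Ioo_subset_Icc_self
  · exact Eventually.of_forall fun θ => by positivity

theorem halfPlaneIntegral_eq_lintegral_polar : halfPlaneIntegral = ∫⁻ r in Ioi (0 : ℝ),
    ENNReal.ofReal (64 * r * cosArctan r ^ 3 * complEllipticK (cosArctan r) ^ 3) := by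
  have polar_integrand (q : ℝ × ℝ) : ENNReal.ofReal q.1 •
        (ENNReal.ofReal (16 / √(1 + (polarCoord.symm q).2 ^ 2))
          * potentialProfile ((polarCoord.symm q).1 ^ 2 + (1 + (polarCoord.symm q).2 ^ 2)) ^ 2)
      = ENNReal.ofReal q.1 * potentialProfile (1 + q.1 ^ 2) ^ 2
        * ENNReal.ofReal (16 / √(1 + (q.1 * sin q.2) ^ 2)) := by
    have radius : (q.1 * cos q.2) ^ 2 + (1 + (q.1 * sin q.2) ^ 2) = 1 + q.1 ^ 2 := by
      linear_combination q.1 ^ 2 * sin_sq_add_cos_sq q.2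
    simp only [polarCoord_symm_apply, smul_eq_mul, radius]
    ring
  rw [halfPlaneIntegral_eq_lintegral_plane, ← lintegral_comp_polarCoord_symm, polarCoord_target,
    Measure.volume_eq_prod, ← Measure.prod_restrict]
  simp_rw [polar_integrand]
  rw [lintegral_prod _ (by fun_prop)]
  refine setLIntegral_congr_fun measurableSet_Ioi fun r (hr : 0 < r) => ?_
  have c_pos := cosArctan_pos r
  have K_nonneg := complEllipticK_nonneg (cosArctan r)
  simp only [potentialProfile_one_add_sq]
  rw [lintegral_const_mul' _ _ (by finiteness), lintegral_angle,
    ← ENNReal.ofReal_pow (by positivity), ← ENNReal.ofReal_mul hr.le,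
    ← ENNReal.ofReal_mul (by positivity)]
  congr 1
  ring

theorem halfPlaneIntegral_eq_lintegral_complEllipticK :
    halfPlaneIntegral = 64 * ∫⁻ c in Ioo (0 : ℝ) 1, ENNReal.ofReal (complEllipticK c ^ 3) := by
  rw [halfPlaneIntegral_eq_lintegral_polar, setLIntegral_eq_of_bijOn measurableSet_Ioi
    bijOn_cosArctan fun r _ => hasDerivAt_cosArctan r,
    ← lintegral_const_mul' _ _ ENNReal.ofNat_ne_top]
  refine setLIntegral_congr_fun measurableSet_Ioi fun r (hr : 0 < r) => ?_
  have c_pos := cosArctan_pos r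
  rw [abs_neg, abs_of_pos (by positivity), ← ENNReal.ofReal_mul (by positivity),
    ← ENNReal.ofReal_ofNat, ← ENNReal.ofReal_mul (by norm_num)]
  congr 1
  ring

theorem lintegral_Ioo_complEllipticK_pow_three :
    ∫⁻ c in Ioo (0 : ℝ) 1, ENNReal.ofReal (complEllipticK c ^ 3)
      = ENNReal.ofReal (Gamma (1 / 4) ^ 8 / (128 * π ^ 2)) := by
  have sixty_four_mul : 64 * ∫⁻ c in Ioo (0 : ℝ) 1, ENNReal.ofReal (complEllipticK c ^ 3)
      = 64 * ENNReal.ofReal (Gamma (1 / 4) ^ 8 / (128 * π ^ 2)) := by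
    rw [← halfPlaneIntegral_eq_lintegral_complEllipticK,
      halfPlaneIntegral_eq_lemniscateIntegral_pow, lemniscateIntegral_eq,
      ← ENNReal.ofReal_pow (by positivity), ← ENNReal.ofReal_ofNat, ← ENNReal.ofReal_ofNat,
      ← ENNReal.ofReal_mul (by norm_num), ← ENNReal.ofReal_mul (by norm_num)]
    congr 1
    rw [div_pow, mul_pow, show √π ^ 4 = (√π ^ 2) ^ 2 by ring, sq_sqrt pi_pos.le]
    field_simp
    norm_num
  exact (ENNReal.mul_right_inj (by norm_num) ENNReal.ofNat_ne_top).1 sixty_four_mul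

theorem integrableOn_complEllipticK_pow_three :
    IntegrableOn (fun c => complEllipticK c ^ 3) (Ioo 0 1) := by
  have nonneg : 0 ≤ᵐ[volume.restrict (Ioo 0 1)] fun c => complEllipticK c ^ 3 :=
    Eventually.of_forall fun c => pow_nonneg (complEllipticK_nonneg c) 3
  refine ⟨(measurable_complEllipticK.pow_const 3).aestronglyMeasurable,
    (hasFiniteIntegral_iff_ofReal nonneg).2 ?_⟩
  rw [lintegral_Ioo_complEllipticK_pow_three]
  exact ENNReal.ofReal_lt_top

theorem setIntegral_complEllipticK_pow_three :
    ∫ c in Ioo (0 : ℝ) 1, complEllipticK c ^ 3 = Gamma (1 / 4) ^ 8 / (128 * π ^ 2) := by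
  rw [integral_eq_lintegral_of_nonneg_ae
      (Eventually.of_forall fun c => pow_nonneg (complEllipticK_nonneg c) 3)
      (measurable_complEllipticK.pow_const 3).aestronglyMeasurable,
    lintegral_Ioo_complEllipticK_pow_three, ENNReal.toReal_ofReal (by positivity)]

/-! ### Moments of `K` and `K'` -/

/-- The moment `∫₀¹ K(k)^a K'(k)^b k^c dk` of the complete elliptic integral and its complement. -/
def ellipticMoment (a b c : ℕ) : ℝ :=
  ∫ k in (0 : ℝ)..1, ellipticK k ^ a * ellipticK √(1 - k ^ 2) ^ b * k ^ c

theorem ellipticMoment_eq_setIntegral (a b c : ℕ) : ellipticMoment a b c =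
    ∫ k in Ioo (0 : ℝ) 1, complEllipticK √(1 - k ^ 2) ^ a * complEllipticK k ^ b * k ^ c := by
  rw [ellipticMoment, intervalIntegral.integral_of_le zero_le_one, integral_Ioc_eq_integral_Ioo]
  refine setIntegral_congr_fun measurableSet_Ioo fun k hk => ?_
  have compl_sq : √(1 - k ^ 2) ^ 2 = 1 - k ^ 2 := sq_sqrt (by nlinarith [hk.1, hk.2])
  rw [ellipticK_eq_complEllipticK compl_sq, ellipticK_eq_complEllipticK
    (show k ^ 2 = 1 - √(1 - k ^ 2) ^ 2 by rw [compl_sq, sub_sub_cancel])]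

theorem pow_mul_pow_le_add_pow {x y : ℝ} (hx : 0 ≤ x) (hy : 0 ≤ y) (a b : ℕ) :
    x ^ a * y ^ b ≤ x ^ (a + b) + y ^ (a + b) := by
  rcases le_total x y with hxy | hxy
  · calc x ^ a * y ^ b ≤ y ^ a * y ^ b := by gcongr
      _ ≤ x ^ (a + b) + y ^ (a + b) := by rw [← pow_add]; linarith [pow_nonneg hx (a + b)]
  · calc x ^ a * y ^ b ≤ x ^ a * x ^ b := by gcongr
      _ ≤ x ^ (a + b) + y ^ (a + b) := by rw [← pow_add]; linarith [pow_nonneg hy (a + b)]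

theorem measurable_complEllipticK_sqrt_one_sub_sq :
    Measurable fun k : ℝ => complEllipticK √(1 - k ^ 2) :=
  measurable_complEllipticK.comp (by fun_prop)

theorem integrableOn_complEllipticK_sqrt_pow_three :
    IntegrableOn (fun k : ℝ => complEllipticK √(1 - k ^ 2) ^ 3) (Ioo 0 1) := by
  have landen := (integrableOn_iff_of_bijOn measurableSet_Ioo bijOn_one_sub_div_one_add
    fun k hk => hasDerivAt_one_sub_div_one_add (by linarith [hk.1])).1
      integrableOn_complEllipticK_pow_three
  refine landen.mono' (measurable_complEllipticK_sqrt_one_sub_sq.pow_const 3).aestronglyMeasurable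
    ((ae_restrict_mem measurableSet_Ioo).mono fun k hk => ?_)
  have k_pos := hk.1
  have K_nonneg := complEllipticK_nonneg √(1 - k ^ 2)
  have majorant_eq : |-(2 / (1 + k) ^ 2)| • complEllipticK ((1 - k) / (1 + k)) ^ 3
      = 2 * (1 + k) * complEllipticK √(1 - k ^ 2) ^ 3 := by
    rw [complEllipticK_landen hk, abs_neg, abs_of_pos (by positivity), smul_eq_mul]
    field_simp
  rw [majorant_eq, norm_of_nonneg (by positivity)]
  exact le_mul_of_one_le_left (by positivity) (by linarith)

section TotalDegreeThree

variable {a b : ℕ} (hab : a + b = 3)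
include hab

theorem integrableOn_complEllipticK_pow_mul_pow (c : ℕ) : IntegrableOn
    (fun k : ℝ => complEllipticK √(1 - k ^ 2) ^ a * complEllipticK k ^ b * k ^ c) (Ioo 0 1) := by
  have := measurable_complEllipticK_sqrt_one_sub_sq
  have := measurable_complEllipticK
  refine (integrableOn_complEllipticK_sqrt_pow_three.add
    integrableOn_complEllipticK_pow_three).mono' (Measurable.aestronglyMeasurable (by fun_prop))
      ((ae_restrict_mem measurableSet_Ioo).mono fun k hk => ?_)
  have k_nonneg := hk.1.le
  have K_nonneg := complEllipticK_nonneg √(1 - k ^ 2)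
  have K'_nonneg := complEllipticK_nonneg k
  rw [norm_of_nonneg (by positivity)]
  calc complEllipticK √(1 - k ^ 2) ^ a * complEllipticK k ^ b * k ^ c
      ≤ complEllipticK √(1 - k ^ 2) ^ a * complEllipticK k ^ b :=
        mul_le_of_le_one_right (by positivity) (pow_le_one₀ k_nonneg hk.2.le)
    _ ≤ complEllipticK √(1 - k ^ 2) ^ 3 + complEllipticK k ^ 3 :=
        hab ▸ pow_mul_pow_le_add_pow K_nonneg K'_nonneg a b

theorem two_pow_mul_ellipticMoment :
    2 ^ a * ellipticMoment a b 0 = 2 * (ellipticMoment b a 0 + ellipticMoment b a 1) := by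
  have hba : b + a = 3 := by omega
  simp only [ellipticMoment_eq_setIntegral]
  rw [setIntegral_eq_of_bijOn measurableSet_Ioo bijOn_one_sub_div_one_add
      fun k hk => hasDerivAt_one_sub_div_one_add (by linarith [hk.1]),
    ← integral_add (integrableOn_complEllipticK_pow_mul_pow hba 0)
      (integrableOn_complEllipticK_pow_mul_pow hba 1),
    ← MeasureTheory.integral_const_mul, ← MeasureTheory.integral_const_mul]
  refine setIntegral_congr_fun measurableSet_Ioo fun k hk => ?_
  have one_add_pos : 0 < 1 + k := by linarith [hk.1]
  have jacobian : 2 / (1 + k) ^ 2 * (1 + k) ^ a * (1 + k) ^ b = 2 * (1 + k) := by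
    rw [mul_assoc, ← pow_add, hab]
    field_simp
  simp only [smul_eq_mul, pow_zero, pow_one, mul_one]
  rw [complEllipticK_landen hk, complEllipticK_sqrt_landen hk, abs_neg,
    abs_of_pos (by positivity), mul_pow, mul_pow, div_pow]
  calc _ = 2 / (1 + k) ^ 2 * (1 + k) ^ a * (1 + k) ^ b
        * (complEllipticK √(1 - k ^ 2) ^ b * complEllipticK k ^ a) := by field_simp
    _ = _ := by rw [jacobian]; ring

end TotalDegreeThree

theorem ellipticMoment_one_comm (a b : ℕ) : ellipticMoment a b 1 = ellipticMoment b a 1 := by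
  simp only [ellipticMoment_eq_setIntegral]
  rw [setIntegral_eq_of_bijOn measurableSet_Ioo bijOn_sqrt_one_sub_sq
    fun k hk => hasDerivAt_sqrt_one_sub_sq (by nlinarith [hk.1, hk.2])]
  refine setIntegral_congr_fun measurableSet_Ioo fun k hk => ?_
  have k_pos := hk.1
  have compl_pos := (sqrt_one_sub_sq_mem_Ioo hk).1
  simp only [smul_eq_mul, pow_one, sqrt_one_sub_sq_sqrt_one_sub_sq hk]
  rw [abs_neg, abs_of_pos (by positivity)]
  field_simp

theorem ellipticMoment_zero_three_zero :
    ellipticMoment 0 3 0 = Gamma (1 / 4) ^ 8 / (128 * π ^ 2) := by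
  simpa only [pow_zero, one_mul, mul_one, setIntegral_complEllipticK_pow_three]
    using ellipticMoment_eq_setIntegral 0 3 0

/-! ### Boundary values of `K'` on the imaginary axis -/

/-- The real part of the boundary value of (the holomorphic extension of) `K'` at `κ i`. -/
def boundaryRe (κ : ℝ) : ℝ := cosArctan κ * complEllipticK (κ * cosArctan κ)

/-- Minus the imaginary part of the boundary value of `K'` at `κ i`. -/
def boundaryNegIm (κ : ℝ) : ℝ := cosArctan κ * complEllipticK (cosArctan κ)

/-- The absolute value of the integrand of `K'` at `κ i`, after the substitution `s = κ t`. -/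
def boundaryKernel (κ s : ℝ) : ℝ := 1 / √((κ ^ 2 + s ^ 2) * |1 - s ^ 2|)

/-- The integral of `boundaryKernel κ`, which bounds `|K'|` on the line `Im c = κ` and outside the
circle `|c| = κ`. -/
def boundaryMajorant (κ : ℝ) : ℝ := ∫ s in Ioi (0 : ℝ), boundaryKernel κ s

theorem boundaryMajorant_nonneg (κ : ℝ) : 0 ≤ boundaryMajorant κ :=
  integral_nonneg fun s => by unfold boundaryKernel; positivity

theorem sqrt_one_sub_mul_cosArctan_sq (r : ℝ) : √(1 - (r * cosArctan r) ^ 2) = cosArctan r := by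
  rw [mul_cosArctan_sq, sub_sub_cancel, sqrt_sq (cosArctan_pos r).le]

theorem bijOn_mul_cosArctan : BijOn (fun r => r * cosArctan r) (Ioi 0) (Ioo 0 1) :=
  (bijOn_sqrt_one_sub_sq.comp bijOn_cosArctan).congr fun r (hr : 0 < r) => by
    rw [Function.comp_apply, ← mul_cosArctan_sq, sqrt_sq (mul_pos hr (cosArctan_pos r)).le]

theorem hasDerivAt_mul_cosArctan (r : ℝ) :
    HasDerivAt (fun r => r * cosArctan r) (cosArctan r ^ 3) r := by
  have cube_eq : cosArctan r ^ 3 * (1 + r ^ 2) = cosArctan r := by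
    rw [pow_succ, cosArctan_sq]
    field_simp
  refine ((hasDerivAt_id r).mul (hasDerivAt_cosArctan r)).congr_deriv ?_
  rw [id]
  linear_combination -cube_eq

theorem bijOn_sqrt_one_add_sq : BijOn (fun t : ℝ => √(1 + t ^ 2)) (Ioi 0) (Ioi 1) := by
  refine InvOn.bijOn (f' := fun s => √(s ^ 2 - 1))
    ⟨fun t (ht : 0 < t) => ?_, fun s (hs : 1 < s) => ?_⟩
    (fun t (ht : 0 < t) => lt_sqrt_of_sq_lt (by nlinarith))
    fun s (hs : 1 < s) => sqrt_pos.2 (by nlinarith)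
  · simp only
    rw [sq_sqrt (by positivity), add_sub_cancel_left, sqrt_sq ht.le]
  · simp only
    rw [sq_sqrt (by nlinarith), add_sub_cancel, sqrt_sq (by linarith)]

theorem hasDerivAt_sqrt_one_add_sq (t : ℝ) :
    HasDerivAt (fun t : ℝ => √(1 + t ^ 2)) (t / √(1 + t ^ 2)) t := by
  have radicand_pos : 0 < 1 + t ^ 2 := by positivity
  refine ((((hasDerivAt_id t).pow 2).const_add 1).sqrt radicand_pos.ne').congr_deriv ?_
  simp only [id, Pi.pow_apply, Nat.cast_ofNat]
  ring

theorem boundaryKernel_cosArctan {κ t : ℝ} (ht : 0 < t) :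
    |-(t * cosArctan t ^ 3)| • boundaryKernel κ (cosArctan t)
      = cosArctan κ * (1 / √((1 + t ^ 2) * (1 + (κ * cosArctan κ) ^ 2 * t ^ 2))) := by
  have ct_pos := cosArctan_pos t
  have cκ_pos := cosArctan_pos κ
  have factor : (κ ^ 2 + cosArctan t ^ 2) * |1 - cosArctan t ^ 2| = (t * cosArctan t ^ 3) ^ 2
      * ((1 / cosArctan κ) ^ 2 * ((1 + t ^ 2) * (1 + (κ * cosArctan κ) ^ 2 * t ^ 2))) := by
    rw [← mul_cosArctan_sq t, abs_of_pos (by positivity), pow_succ (cosArctan t) 2]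
    simp only [mul_pow, div_pow, cosArctan_sq]
    field_simp
    ring
  rw [boundaryKernel, factor, abs_neg, abs_of_pos (by positivity), sqrt_mul (by positivity),
    sqrt_mul (by positivity), sqrt_sq (by positivity), sqrt_sq (by positivity), smul_eq_mul]
  field_simp

theorem boundaryKernel_sqrt_one_add_sq {κ t : ℝ} (ht : 0 < t) :
    |t / √(1 + t ^ 2)| • boundaryKernel κ √(1 + t ^ 2)
      = cosArctan κ * (1 / √((1 + t ^ 2) * (1 + cosArctan κ ^ 2 * t ^ 2))) := by
  have cκ_pos := cosArctan_pos κ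
  have factor : (κ ^ 2 + √(1 + t ^ 2) ^ 2) * |1 - √(1 + t ^ 2) ^ 2|
      = t ^ 2 * ((1 / cosArctan κ) ^ 2 * (1 + cosArctan κ ^ 2 * t ^ 2)) := by
    rw [sq_sqrt (by positivity), sub_add_cancel_left, abs_neg, abs_of_pos (by positivity), div_pow,
      cosArctan_sq]
    field_simp
    ring
  rw [boundaryKernel, factor, abs_of_pos (by positivity), sqrt_mul (by positivity),
    sqrt_mul (by positivity), sqrt_sq (by positivity), sqrt_sq (by positivity),
    sqrt_mul (by positivity), smul_eq_mul]
  field_simp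

theorem integrableOn_Ioo_boundaryKernel {κ : ℝ} (hκ : κ ≠ 0) :
    IntegrableOn (boundaryKernel κ) (Ioo 0 1) :=
  (integrableOn_iff_of_bijOn measurableSet_Ioi bijOn_cosArctan
    fun t _ => hasDerivAt_cosArctan t).2 <|
      ((integrable_one_div_sqrt_one_add_sq_mul (mul_ne_zero hκ (cosArctan_pos κ).ne')).const_mul
        (cosArctan κ)).integrableOn.congr_fun (fun _ ht => (boundaryKernel_cosArctan ht).symm)
          measurableSet_Ioi

theorem integral_Ioo_boundaryKernel (κ : ℝ) :
    ∫ s in Ioo 0 1, boundaryKernel κ s = boundaryRe κ := by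
  rw [setIntegral_eq_of_bijOn measurableSet_Ioi bijOn_cosArctan fun t _ => hasDerivAt_cosArctan t,
    setIntegral_congr_fun measurableSet_Ioi fun t ht => boundaryKernel_cosArctan ht,
    MeasureTheory.integral_const_mul, boundaryRe, complEllipticK]

theorem integrableOn_Ioi_one_boundaryKernel (κ : ℝ) :
    IntegrableOn (boundaryKernel κ) (Ioi 1) :=
  (integrableOn_iff_of_bijOn measurableSet_Ioi bijOn_sqrt_one_add_sq
    fun t _ => hasDerivAt_sqrt_one_add_sq t).2 <|
      ((integrable_one_div_sqrt_one_add_sq_mul (cosArctan_pos κ).ne').const_mul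
        (cosArctan κ)).integrableOn.congr_fun (fun _ ht => (boundaryKernel_sqrt_one_add_sq ht).symm)
          measurableSet_Ioi

theorem integral_Ioi_one_boundaryKernel (κ : ℝ) :
    ∫ s in Ioi 1, boundaryKernel κ s = boundaryNegIm κ := by
  rw [setIntegral_eq_of_bijOn measurableSet_Ioi bijOn_sqrt_one_add_sq
      fun t _ => hasDerivAt_sqrt_one_add_sq t,
    setIntegral_congr_fun measurableSet_Ioi fun t ht => boundaryKernel_sqrt_one_add_sq ht,
    MeasureTheory.integral_const_mul, boundaryNegIm, complEllipticK]

section SplitHalfLine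

variable {E : Type*} [NormedAddCommGroup E] {f : ℝ → E} {a b : ℝ}

theorem integrableOn_Ioi_of_Ioo_of_Ioi (hab : a ≤ b) (hf : IntegrableOn f (Ioo a b))
    (hf' : IntegrableOn f (Ioi b)) : IntegrableOn f (Ioi a) := by
  rw [← Ioc_union_Ioi_eq_Ioi hab]
  exact ((integrableOn_Ioc_iff_integrableOn_Ioo (by finiteness)).2 hf).union hf'

theorem setIntegral_Ioi_eq_add [NormedSpace ℝ E] (hab : a ≤ b) (hf : IntegrableOn f (Ioo a b))
    (hf' : IntegrableOn f (Ioi b)) :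
    ∫ x in Ioi a, f x = (∫ x in Ioo a b, f x) + ∫ x in Ioi b, f x := by
  rw [← Ioc_union_Ioi_eq_Ioi hab, setIntegral_union (Ioc_disjoint_Ioi le_rfl) measurableSet_Ioi
    ((integrableOn_Ioc_iff_integrableOn_Ioo (by finiteness)).2 hf) hf',
    integral_Ioc_eq_integral_Ioo]

end SplitHalfLine

theorem integrableOn_boundaryKernel {κ : ℝ} (hκ : κ ≠ 0) :
    IntegrableOn (boundaryKernel κ) (Ioi 0) :=
  integrableOn_Ioi_of_Ioo_of_Ioi zero_le_one (integrableOn_Ioo_boundaryKernel hκ)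
    (integrableOn_Ioi_one_boundaryKernel κ)

theorem boundaryMajorant_eq_add {κ : ℝ} (hκ : κ ≠ 0) :
    boundaryMajorant κ = boundaryRe κ + boundaryNegIm κ := by
  rw [boundaryMajorant, setIntegral_Ioi_eq_add zero_le_one (integrableOn_Ioo_boundaryKernel hκ)
      (integrableOn_Ioi_one_boundaryKernel κ),
    integral_Ioo_boundaryKernel, integral_Ioi_one_boundaryKernel]

theorem antitoneOn_boundaryMajorant : AntitoneOn boundaryMajorant (Ioi 0) := by
  intro κ₁ (hκ₁ : 0 < κ₁) κ₂ (hκ₂ : 0 < κ₂) hle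
  refine setIntegral_mono_on (integrableOn_boundaryKernel hκ₂.ne')
    (integrableOn_boundaryKernel hκ₁.ne') measurableSet_Ioi fun s (hs : 0 < s) => ?_
  unfold boundaryKernel
  rcases (abs_nonneg (1 - s ^ 2)).eq_or_lt' with h | h
  · rw [h, mul_zero, mul_zero]
  · gcongr

section TotalDegreeThree

variable {a b : ℕ} (hab : a + b = 3)
include hab

theorem cosArctan_pow_mul_moment_integrand (κ : ℝ) :
    |cosArctan κ ^ 3| • (complEllipticK √(1 - (κ * cosArctan κ) ^ 2) ^ a
      * complEllipticK (κ * cosArctan κ) ^ b * (κ * cosArctan κ) ^ 0)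
      = boundaryNegIm κ ^ a * boundaryRe κ ^ b := by
  rw [abs_of_pos (pow_pos (cosArctan_pos κ) 3), sqrt_one_sub_mul_cosArctan_sq, boundaryRe,
    boundaryNegIm, mul_pow, mul_pow, smul_eq_mul, ← hab]
  ring

theorem ellipticMoment_zero_eq_setIntegral_boundary :
    ellipticMoment a b 0 = ∫ κ in Ioi (0 : ℝ), boundaryNegIm κ ^ a * boundaryRe κ ^ b := by
  rw [ellipticMoment_eq_setIntegral, setIntegral_eq_of_bijOn measurableSet_Ioi bijOn_mul_cosArctan
    fun κ _ => hasDerivAt_mul_cosArctan κ]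
  exact setIntegral_congr_fun measurableSet_Ioi
    fun κ _ => cosArctan_pow_mul_moment_integrand hab κ

theorem integrableOn_boundaryNegIm_pow_mul_boundaryRe_pow :
    IntegrableOn (fun κ => boundaryNegIm κ ^ a * boundaryRe κ ^ b) (Ioi 0) :=
  ((integrableOn_iff_of_bijOn measurableSet_Ioi bijOn_mul_cosArctan
    fun κ _ => hasDerivAt_mul_cosArctan κ).1
      (integrableOn_complEllipticK_pow_mul_pow hab 0)).congr_fun
        (fun κ _ => cosArctan_pow_mul_moment_integrand hab κ) measurableSet_Ioi

end TotalDegreeThree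

theorem integrableOn_boundaryMajorant_pow_three :
    IntegrableOn (fun κ => boundaryMajorant κ ^ 3) (Ioi 0) := by
  have expanded := (((integrableOn_boundaryNegIm_pow_mul_boundaryRe_pow (zero_add 3)).add
    ((integrableOn_boundaryNegIm_pow_mul_boundaryRe_pow (a := 1) (b := 2) rfl).const_mul 3)).add
    ((integrableOn_boundaryNegIm_pow_mul_boundaryRe_pow (a := 2) (b := 1) rfl).const_mul 3)).add
    (integrableOn_boundaryNegIm_pow_mul_boundaryRe_pow (add_zero 3))
  refine expanded.congr_fun (fun κ (hκ : 0 < κ) => ?_) measurableSet_Ioi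
  simp only [Pi.add_apply]
  rw [boundaryMajorant_eq_add hκ.ne']
  ring

theorem tendsto_mul_atTop_of_antitoneOn_of_integrableOn {f : ℝ → ℝ} (hf : AntitoneOn f (Ioi 0))
    (nonneg : ∀ x, 0 < x → 0 ≤ f x) (integrable : IntegrableOn f (Ioi 0)) :
    Tendsto (fun T => T * f T) atTop (𝓝 0) := by
  have integral_Ioc_half : Tendsto (fun T : ℝ => 2 * ((∫ x in 0..T, f x) - ∫ x in 0..T / 2, f x))
      atTop (𝓝 0) := by
    have full := intervalIntegral_tendsto_integral_Ioi 0 integrable tendsto_id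
    have half := intervalIntegral_tendsto_integral_Ioi 0 integrable
      (tendsto_id.atTop_div_const two_pos)
    simpa only [sub_self, mul_zero, id] using (full.sub half).const_mul 2
  refine squeeze_zero' ((eventually_gt_atTop 0).mono fun T hT => mul_nonneg hT.le (nonneg T hT))
    ((eventually_gt_atTop 0).mono fun T hT => ?_) integral_Ioc_half
  have half_pos : 0 < T / 2 := by positivity
  have half_le : T / 2 ≤ T := half_le_self hT.le
  have intervalIntegrable {a b : ℝ} (ha : 0 ≤ a) (hab : a ≤ b) : IntervalIntegrable f volume a b :=
    (intervalIntegrable_iff_integrableOn_Ioc_of_le hab).2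
      (integrable.mono_set fun x hx => ha.trans_lt hx.1)
  have lower : (T - T / 2) * f T ≤ ∫ x in T / 2..T, f x := by
    rw [← smul_eq_mul, ← intervalIntegral.integral_const]
    exact integral_mono_on half_le intervalIntegrable_const (intervalIntegrable half_pos.le half_le)
      fun x hx => hf (half_pos.trans_le hx.1) hT hx.2
  rw [← integral_add_adjacent_intervals (intervalIntegrable le_rfl half_pos.le)
    (intervalIntegrable half_pos.le half_le)]
  linarith

theorem tendsto_mul_boundaryMajorant_pow_three :
    Tendsto (fun T => T * boundaryMajorant T ^ 3) atTop (𝓝 0) :=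
  tendsto_mul_atTop_of_antitoneOn_of_integrableOn
    (fun _ hx y hy hle => pow_le_pow_left₀ (boundaryMajorant_nonneg y)
      (antitoneOn_boundaryMajorant hx hy hle) 3)
    (fun x _ => pow_nonneg (boundaryMajorant_nonneg x) 3) integrableOn_boundaryMajorant_pow_three

/-! ### Holomorphic parametric integrals and Cauchy's theorem on a rectangle -/

section HolomorphicParametricIntegral

variable {α E : Type*} [MeasurableSpace α] {μ : Measure α} [NormedAddCommGroup E] [NormedSpace ℂ E]
  {F : ℂ → α → E} {c : ℂ} {s : Set ℂ}

theorem aestronglyMeasurable_deriv_param (hs : s ∈ 𝓝 c)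
    (meas : ∀ z ∈ s, AEStronglyMeasurable (F z) μ)
    (diff : ∀ᵐ a ∂μ, DifferentiableAt ℂ (F · a) c) :
    AEStronglyMeasurable (fun a => deriv (F · a) c) μ := by
  obtain ⟨R, R_pos, ball_subset⟩ := Metric.mem_nhds_iff.1 hs
  obtain ⟨u, -, u_mem, u_lim⟩ := exists_seq_strictAnti_tendsto' R_pos
  have u_ne (n : ℕ) : (u n : ℂ) ≠ 0 := Complex.ofReal_ne_zero.2 (u_mem n).1.ne'
  have u_lim_punctured : Tendsto (fun n => (u n : ℂ)) atTop (𝓝[≠] 0) :=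
    tendsto_nhdsWithin_iff.2 ⟨(Complex.continuous_ofReal.tendsto 0).comp u_lim, .of_forall u_ne⟩
  have mem_s (n : ℕ) : c + u n ∈ s := ball_subset <| by
    rw [mem_ball_iff_norm, add_sub_cancel_left, Complex.norm_of_nonneg (u_mem n).1.le]
    exact (u_mem n).2
  refine aestronglyMeasurable_of_tendsto_ae atTop
    (f := fun n a => (u n : ℂ)⁻¹ • (F (c + u n) a - F c a))
    (fun n => ((meas _ (mem_s n)).sub (meas c (mem_of_mem_nhds hs))).const_smul _) ?_
  filter_upwards [diff] with a ha
  exact ha.hasDerivAt.tendsto_slope_zero.comp u_lim_punctured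

theorem differentiableAt_integral_of_norm_le {bound : α → ℝ} (hs : s ∈ 𝓝 c)
    (meas : ∀ z ∈ s, AEStronglyMeasurable (F z) μ)
    (diff : ∀ᵐ a ∂μ, DifferentiableOn ℂ (F · a) s)
    (norm_le : ∀ᵐ a ∂μ, ∀ z ∈ s, ‖F z a‖ ≤ bound a) (bound_integrable : Integrable bound μ) :
    DifferentiableAt ℂ (fun z => ∫ a, F z a ∂μ) c := by
  obtain ⟨R, R_pos, ball_subset⟩ := Metric.mem_nhds_iff.1 hs
  have half_pos : 0 < R / 2 := by positivity
  have closedBall_subset {z : ℂ} (hz : z ∈ Metric.ball c (R / 2)) :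
      Metric.closedBall z (R / 2) ⊆ s := fun w hw => ball_subset <| by
    rw [Metric.mem_ball] at hz ⊢
    linarith [dist_triangle w z c, Metric.mem_closedBall.1 hw]
  have mem_nhds {z : ℂ} (hz : z ∈ Metric.ball c (R / 2)) : s ∈ 𝓝 z :=
    mem_of_superset (Metric.closedBall_mem_nhds z half_pos) (closedBall_subset hz)
  refine (hasDerivAt_integral_of_dominated_loc_of_deriv_le (F' := fun z a => deriv (F · a) z)
    (bound := fun a => bound a / (R / 2)) (Metric.ball_mem_nhds c half_pos)
    (mem_of_superset hs meas)
    (bound_integrable.mono' (meas c (mem_of_mem_nhds hs)) ?_)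
    (aestronglyMeasurable_deriv_param hs meas ?_) ?_ (bound_integrable.div_const _)
    ?_).2.differentiableAt
  · exact norm_le.mono fun a ha => ha c (mem_of_mem_nhds hs)
  · exact diff.mono fun a ha => ha.differentiableAt hs
  · filter_upwards [diff, norm_le] with a ha ha' z hz
    exact Complex.norm_deriv_le_of_forall_mem_sphere_norm_le half_pos
      (DifferentiableOn.diffContOnCl_ball (ha.mono (closedBall_subset hz)) subset_rfl) fun w hw =>
        ha' w (closedBall_subset hz (Metric.sphere_subset_closedBall hw))
  · filter_upwards [diff] with a ha z hz
    exact (ha.differentiableAt (mem_nhds hz)).hasDerivAt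

end HolomorphicParametricIntegral

theorem abs_re_integral_left_edge_le {f : ℂ → ℂ} {a b T C : ℝ} (hab : a ≤ b) (hT : 0 ≤ T)
    (diff : DifferentiableOn ℂ f (Icc a b ×ℂ Icc 0 T)) (real : ∀ x ∈ Icc a b, (f x).im = 0)
    (top_le : ∀ x ∈ Icc a b, ‖f (x + T * Complex.I)‖ ≤ C)
    (right_le : ∀ y ∈ Icc 0 T, ‖f (b + y * Complex.I)‖ ≤ C) :
    |(∫ y in 0..T, f (a + y * Complex.I)).re| ≤ C * ((b - a) + T) := by
  have cauchy := Complex.integral_boundary_rect_eq_zero_of_differentiableOn f a (b + T * Complex.I)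
    (by simpa [uIcc_of_le hab, uIcc_of_le hT] using diff)
  simp only [Complex.ofReal_re, Complex.ofReal_im, Complex.add_re, Complex.add_im, Complex.mul_re,
    Complex.mul_im, Complex.I_re, Complex.I_im, mul_zero, mul_one, sub_zero, add_zero, zero_add,
    zero_mul, Complex.ofReal_zero, smul_eq_mul] at cauchy
  have bottom : (∫ x in a..b, f x).im = 0 := by
    have congr : EqOn (fun x : ℝ => f x) (fun x => ((f x).re : ℂ)) (uIcc a b) := fun x hx =>
      Complex.ext rfl (real x (uIcc_of_le hab ▸ hx))
    rw [intervalIntegral.integral_congr congr, intervalIntegral.integral_ofReal, Complex.ofReal_im]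
  have top : ‖∫ x in a..b, f (x + T * Complex.I)‖ ≤ C * (b - a) := by
    rw [← abs_of_nonneg (sub_nonneg.2 hab)]
    exact intervalIntegral.norm_integral_le_of_norm_le_const fun x hx =>
      top_le x (Ioc_subset_Icc_self (uIoc_of_le hab ▸ hx))
  have right : ‖∫ y in 0..T, f (b + y * Complex.I)‖ ≤ C * T := by
    simpa only [sub_zero, abs_of_nonneg hT] using
      intervalIntegral.norm_integral_le_of_norm_le_const fun y hy =>
        right_le y (Ioc_subset_Icc_self (uIoc_of_le hT ▸ hy))
  have imaginary_part := congrArg Complex.im cauchy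
  simp only [Complex.sub_im, Complex.add_im, Complex.mul_im, Complex.I_re, Complex.I_im, zero_mul,
    one_mul, zero_add, Complex.zero_im, bottom] at imaginary_part
  have top_im := abs_le.1 ((Complex.abs_im_le_norm _).trans top)
  have right_re := abs_le.1 ((Complex.abs_re_le_norm _).trans right)
  rw [abs_le]
  constructor <;> linarith [top_im.1, top_im.2, right_re.1, right_re.2]

/-! ### The holomorphic extension of `K'` -/

theorem norm_complexSqrt (z : ℂ) : ‖Complex.sqrt z‖ = √‖z‖ := by
  rw [Complex.sqrt, ← Nat.cast_two, Complex.norm_cpow_inv_nat, sqrt_eq_rpow, one_div, Nat.cast_two]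

theorem measurable_complexSqrt : Measurable Complex.sqrt := by
  unfold Complex.sqrt
  fun_prop

theorem complexSqrt_ofReal {x : ℝ} (hx : 0 ≤ x) : Complex.sqrt x = √x := by
  rw [Complex.sqrt_of_nonneg (by exact_mod_cast hx), Complex.ofReal_re]

theorem complexSqrt_ofReal_of_nonpos {x : ℝ} (hx : x ≤ 0) :
    Complex.sqrt x = Complex.I * √(-x) := by
  rw [← complexSqrt_ofReal (neg_nonneg.2 hx), ← Complex.sqrt_neg_of_nonneg
    (by exact_mod_cast neg_nonneg.2 hx), Complex.ofReal_neg, neg_neg]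

theorem continuousOn_complexSqrt : ContinuousOn Complex.sqrt {z | 0 ≤ z.im} := by
  intro z _
  by_cases h : 0 ≤ z.re ∨ z.im ≠ 0
  · exact (Complex.continuousAt_cpow_const_of_re_pos h (by simp)).continuousWithinAt
  · push Not at h
    have z_ne : z ≠ 0 := fun h0 => by simp [h0] at h
    have log_mul := (Complex.continuousWithinAt_log_of_re_neg_of_im_zero h.1 h.2).mul_const
      (2⁻¹ : ℂ)
    refine (log_mul.cexp).congr_of_eventuallyEq ?_ (Complex.cpow_def_of_ne_zero z_ne _)
    filter_upwards [mem_nhdsWithin_of_mem_nhds (isOpen_ne.mem_nhds z_ne)] with w hw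
    exact Complex.cpow_def_of_ne_zero hw _

/-- The integrand `1 / √((1 + t²)(1 + c²t²))` of `K'` at a complex argument `c`, with the principal
branch of the square root. -/
def ellipticKernel (c : ℂ) (t : ℝ) : ℂ :=
  1 / ((√(1 + t ^ 2) : ℝ) * Complex.sqrt (1 + c ^ 2 * t ^ 2))

/-- The holomorphic extension of `K'` to the half-plane `0 < Re c`, together with its boundary
values on the upper imaginary axis. -/
def complexComplEllipticK (c : ℂ) : ℂ := ∫ t in Ioi (0 : ℝ), ellipticKernel c t

theorem measurable_ellipticKernel (c : ℂ) : Measurable (ellipticKernel c) := by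
  have := measurable_complexSqrt
  unfold ellipticKernel
  fun_prop

theorem norm_ellipticKernel (c : ℂ) (t : ℝ) :
    ‖ellipticKernel c t‖ = 1 / √((1 + t ^ 2) * ‖1 + c ^ 2 * (t : ℂ) ^ 2‖) := by
  rw [ellipticKernel, norm_div, norm_one, norm_mul, norm_complexSqrt,
    Complex.norm_of_nonneg (sqrt_nonneg _), sqrt_mul (by positivity)]

section Radicand

variable (c : ℂ) (t : ℝ)

theorem re_one_add_sq_mul_sq :
    (1 + c ^ 2 * (t : ℂ) ^ 2).re = 1 + (c.re ^ 2 - c.im ^ 2) * t ^ 2 := by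
  rw [← Complex.ofReal_pow, Complex.add_re, Complex.one_re, Complex.re_mul_ofReal, sq c,
    Complex.mul_re, sq c.re, sq c.im]

theorem im_one_add_sq_mul_sq : (1 + c ^ 2 * (t : ℂ) ^ 2).im = 2 * c.re * c.im * t ^ 2 := by
  rw [← Complex.ofReal_pow, Complex.add_im, Complex.one_im, Complex.im_mul_ofReal, sq c,
    Complex.mul_im]
  ring

theorem norm_one_add_sq_mul_sq_sq : ‖1 + c ^ 2 * (t : ℂ) ^ 2‖ ^ 2
    = ((1 - c.im * t) ^ 2 + (c.re * t) ^ 2) * ((1 - -c.im * t) ^ 2 + (c.re * t) ^ 2) := by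
  rw [← Complex.normSq_eq_norm_sq, Complex.normSq_apply, re_one_add_sq_mul_sq,
    im_one_add_sq_mul_sq]
  ring

theorem abs_one_sub_im_sq_mul_sq_le : |1 - c.im ^ 2 * t ^ 2| ≤ ‖1 + c ^ 2 * (t : ℂ) ^ 2‖ := by
  refine abs_le_of_sq_le_sq ?_ (norm_nonneg _)
  rw [norm_one_add_sq_mul_sq_sq, show (1 - c.im ^ 2 * t ^ 2) ^ 2
    = (1 - c.im * t) ^ 2 * (1 - -c.im * t) ^ 2 by ring]
  gcongr <;> exact le_add_of_nonneg_right (sq_nonneg _)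

theorem abs_one_sub_norm_sq_mul_sq_le : |1 - ‖c‖ ^ 2 * t ^ 2| ≤ ‖1 + c ^ 2 * (t : ℂ) ^ 2‖ := by
  have reverse_triangle := abs_norm_sub_norm_le (1 : ℂ) (-(c ^ 2 * (t : ℂ) ^ 2))
  rwa [norm_one, norm_neg, norm_mul, norm_pow, norm_pow, Complex.norm_real, Real.norm_eq_abs,
    sq_abs, sub_neg_eq_add] at reverse_triangle

theorem re_sq_div_mul_le_norm_one_add_sq_mul_sq :
    c.re ^ 2 / (1 + ‖c‖ ^ 2) * (1 + t ^ 2) ≤ ‖1 + c ^ 2 * (t : ℂ) ^ 2‖ := by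
  have factor_ge {v : ℝ} (hv : c.re ^ 2 + v ^ 2 = ‖c‖ ^ 2) :
      c.re ^ 2 / (1 + ‖c‖ ^ 2) * (1 + t ^ 2) ≤ (1 - v * t) ^ 2 + (c.re * t) ^ 2 := by
    rw [div_mul_eq_mul_div, div_le_iff₀ (by positivity), ← hv]
    nlinarith only [sq_nonneg (1 - v * t), sq_nonneg (v - (c.re ^ 2 + v ^ 2) * t)]
  have norm_sq : c.re ^ 2 + c.im ^ 2 = ‖c‖ ^ 2 := by
    rw [← Complex.normSq_eq_norm_sq, Complex.normSq_apply, sq, sq]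
  refine le_of_sq_le_sq ?_ (norm_nonneg _)
  rw [norm_one_add_sq_mul_sq_sq, sq]
  exact mul_le_mul (factor_ge norm_sq) (factor_ge (by rw [neg_sq, norm_sq])) (by positivity)
    (by positivity)

variable {c}

theorem one_add_sq_mul_sq_mem_slitPlane (hc : 0 < c.re) :
    1 + c ^ 2 * (t : ℂ) ^ 2 ∈ Complex.slitPlane := by
  rw [Complex.mem_slitPlane_iff, re_one_add_sq_mul_sq, im_one_add_sq_mul_sq]
  rcases eq_or_ne (c.im * t) 0 with h | h
  · left
    rw [sub_mul, ← mul_pow c.im, h, zero_pow two_ne_zero, sub_zero]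
    positivity
  · right
    have := left_ne_zero_of_mul h
    have := right_ne_zero_of_mul h
    positivity

end Radicand

theorem mul_boundaryKernel_mul {r : ℝ} (hr : 0 < r) (t : ℝ) :
    r * boundaryKernel r (r * t) = 1 / √((1 + t ^ 2) * |1 - r ^ 2 * t ^ 2|) := by
  rw [boundaryKernel, mul_pow, show (r ^ 2 + r ^ 2 * t ^ 2) * |1 - r ^ 2 * t ^ 2|
    = r ^ 2 * ((1 + t ^ 2) * |1 - r ^ 2 * t ^ 2|) by ring, sqrt_mul (by positivity),
    sqrt_sq hr.le]
  field_simp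

theorem ae_one_sub_sq_mul_sq_ne_zero {r : ℝ} (hr : r ≠ 0) :
    ∀ᵐ t : ℝ, 1 - r ^ 2 * t ^ 2 ≠ 0 := by
  filter_upwards [Measure.ae_ne volume (1 / r), Measure.ae_ne volume (-1 / r)] with t ht ht' h
  have sq_eq : (r * t) ^ 2 = 1 := by rw [mul_pow]; linarith
  rcases sq_eq_one_iff.1 sq_eq with h | h
  · exact ht (by field_simp; linarith)
  · exact ht' (by field_simp; linarith)

theorem integrableOn_mul_boundaryKernel_mul {r : ℝ} (hr : 0 < r) :
    IntegrableOn (fun t => r * boundaryKernel r (r * t)) (Ioi 0) :=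
  ((integrableOn_Ioi_comp_mul_left_iff (boundaryKernel r) 0 hr).2
    (by rw [mul_zero]; exact integrableOn_boundaryKernel hr.ne')).const_mul r

theorem setIntegral_mul_boundaryKernel_mul {r : ℝ} (hr : 0 < r) :
    ∫ t in Ioi (0 : ℝ), r * boundaryKernel r (r * t) = boundaryMajorant r := by
  rw [MeasureTheory.integral_const_mul, ← smul_eq_mul, integral_comp_mul_left_Ioi' _ 0 hr, mul_zero,
    boundaryMajorant]

section Domination

variable {c : ℂ} {r : ℝ} (hr : 0 < r) (h : ∀ t : ℝ, |1 - r ^ 2 * t ^ 2| ≤ ‖1 + c ^ 2 * (t : ℂ) ^ 2‖)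
include hr h

theorem ae_norm_ellipticKernel_le :
    ∀ᵐ t : ℝ, ‖ellipticKernel c t‖ ≤ r * boundaryKernel r (r * t) := by
  filter_upwards [ae_one_sub_sq_mul_sq_ne_zero hr.ne'] with t ht
  rw [norm_ellipticKernel, mul_boundaryKernel_mul hr]
  have : 0 < |1 - r ^ 2 * t ^ 2| := abs_pos.2 ht
  gcongr
  exact h t

theorem norm_complexComplEllipticK_le : ‖complexComplEllipticK c‖ ≤ boundaryMajorant r := by
  rw [← setIntegral_mul_boundaryKernel_mul hr]
  exact norm_integral_le_of_norm_le (integrableOn_mul_boundaryKernel_mul hr)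
    (ae_restrict_of_ae (ae_norm_ellipticKernel_le hr h))

end Domination

theorem norm_complexComplEllipticK_add_mul_I_le {y : ℝ} (hy : 0 < y) (x : ℝ) :
    ‖complexComplEllipticK (x + y * Complex.I)‖ ≤ boundaryMajorant y :=
  norm_complexComplEllipticK_le hy fun t => by
    simpa using abs_one_sub_im_sq_mul_sq_le (x + y * Complex.I) t

theorem norm_complexComplEllipticK_le_of_le_norm {c : ℂ} {r : ℝ} (hr : 0 < r) (hc : r ≤ ‖c‖) :
    ‖complexComplEllipticK c‖ ≤ boundaryMajorant r :=
  (norm_complexComplEllipticK_le (hr.trans_le hc) (abs_one_sub_norm_sq_mul_sq_le c)).trans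
    (antitoneOn_boundaryMajorant hr (hr.trans_le hc) hc)

theorem norm_ellipticKernel_le {c : ℂ} (hc : 0 < c.re) (t : ℝ) :
    ‖ellipticKernel c t‖ ≤ √(1 + ‖c‖ ^ 2) / c.re * (1 + t ^ 2)⁻¹ := by
  have radicand_ge : (c.re / √(1 + ‖c‖ ^ 2) * (1 + t ^ 2)) ^ 2
      ≤ (1 + t ^ 2) * ‖1 + c ^ 2 * (t : ℂ) ^ 2‖ := by
    rw [mul_pow, div_pow, sq_sqrt (by positivity), sq (1 + t ^ 2), ← mul_assoc, mul_comm]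
    gcongr
    exact re_sq_div_mul_le_norm_one_add_sq_mul_sq c t
  calc ‖ellipticKernel c t‖ ≤ 1 / (c.re / √(1 + ‖c‖ ^ 2) * (1 + t ^ 2)) := by
        rw [norm_ellipticKernel]
        gcongr
        exact le_sqrt_of_sq_le radicand_ge
    _ = √(1 + ‖c‖ ^ 2) / c.re * (1 + t ^ 2)⁻¹ := by field_simp

theorem differentiableAt_ellipticKernel {c : ℂ} (hc : 0 < c.re) (t : ℝ) :
    DifferentiableAt ℂ (ellipticKernel · t) c := by
  have mem_slitPlane := one_add_sq_mul_sq_mem_slitPlane t hc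
  have radicand : DifferentiableAt ℂ (fun z : ℂ => 1 + z ^ 2 * (t : ℂ) ^ 2) c := by fun_prop
  have sqrt_ne_zero : Complex.sqrt (1 + c ^ 2 * (t : ℂ) ^ 2) ≠ 0 := by
    rw [← norm_pos_iff, norm_complexSqrt]
    exact sqrt_pos.2 (norm_pos_iff.2 (Complex.slitPlane_ne_zero mem_slitPlane))
  have sqrt_ne_zero' : ((√(1 + t ^ 2) : ℝ) : ℂ) ≠ 0 := by
    have : 0 < 1 + t ^ 2 := by positivity
    exact_mod_cast (sqrt_pos.2 this).ne'
  exact (differentiableAt_const 1).div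
    ((radicand.cpow_const mem_slitPlane).const_mul _) (mul_ne_zero sqrt_ne_zero' sqrt_ne_zero)

theorem differentiableAt_complexComplEllipticK {c : ℂ} (hc : 0 < c.re) :
    DifferentiableAt ℂ complexComplEllipticK c := by
  set bound : ℂ → ℝ := fun z => √(1 + ‖z‖ ^ 2) / z.re
  have bound_continuousAt : ContinuousAt bound c := by
    have : c.re ≠ 0 := hc.ne'
    fun_prop (disch := assumption)
  have mem_nhds : {z : ℂ | 0 < z.re ∧ bound z < bound c + 1} ∈ 𝓝 c :=
    ((Complex.continuous_re.tendsto c).eventually_const_lt hc).and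
      (bound_continuousAt.tendsto.eventually_lt_const (lt_add_one _))
  refine differentiableAt_integral_of_norm_le mem_nhds
    (bound := fun t => (bound c + 1) * (1 + t ^ 2)⁻¹)
    (fun z _ => (measurable_ellipticKernel z).aestronglyMeasurable) (.of_forall fun t z hz =>
      (differentiableAt_ellipticKernel hz.1 t).differentiableWithinAt)
    (.of_forall fun t z hz => (norm_ellipticKernel_le hz.1 t).trans ?_)
    (integrable_inv_one_add_sq.const_mul _).integrableOn
  gcongr
  exact hz.2.le

theorem im_complexComplEllipticK_ofReal (x : ℝ) : (complexComplEllipticK x).im = 0 := by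
  have kernel_real (t : ℝ) : ellipticKernel x t
      = ((1 / (√(1 + t ^ 2) * √(1 + x ^ 2 * t ^ 2)) : ℝ) : ℂ) := by
    have radicand : (1 + (x : ℂ) ^ 2 * (t : ℂ) ^ 2) = ((1 + x ^ 2 * t ^ 2 : ℝ) : ℂ) := by
      push_cast
      rfl
    rw [ellipticKernel, radicand, complexSqrt_ofReal (by positivity)]
    push_cast
    rfl
  simp only [complexComplEllipticK, kernel_real]
  rw [integral_complex_ofReal, Complex.ofReal_im]

/-! ### Boundary values on the imaginary axis -/

section BoundaryValue

variable {κ : ℝ} (hκ : 0 < κ)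
include hκ

theorem tendsto_ellipticKernel_nhdsGT {t : ℝ} (ht : 1 - κ ^ 2 * t ^ 2 ≠ 0) :
    Tendsto (fun ε : ℝ => ellipticKernel (ε + κ * Complex.I) t) (𝓝[>] 0)
      (𝓝 (ellipticKernel (κ * Complex.I) t)) := by
  set radicand : ℝ → ℂ := fun ε => 1 + (ε + κ * Complex.I) ^ 2 * (t : ℂ) ^ 2
  have radicand_zero : radicand 0 = ((1 - κ ^ 2 * t ^ 2 : ℝ) : ℂ) := by
    simp only [radicand]
    push_cast
    linear_combination (κ : ℂ) ^ 2 * (t : ℂ) ^ 2 * Complex.I_sq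
  have radicand_im (ε : ℝ) : (radicand ε).im = 2 * ε * κ * t ^ 2 :=
    (im_one_add_sq_mul_sq (ε + κ * Complex.I) t).trans (by simp)
  have im_nonneg {ε : ℝ} (hε : 0 ≤ ε) : 0 ≤ (radicand ε).im := by
    rw [radicand_im]
    positivity
  have radicand_tendsto : Tendsto radicand (𝓝[>] 0) (𝓝[{z | 0 ≤ z.im}] radicand 0) := by
    have continuous : Continuous radicand := by fun_prop
    exact tendsto_nhdsWithin_iff.2 ⟨continuous.continuousAt.mono_left nhdsWithin_le_nhds,
      eventually_mem_nhdsWithin.mono fun ε hε => im_nonneg hε.le⟩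
  have sqrt_ne_zero : Complex.sqrt (radicand 0) ≠ 0 := by
    rw [← norm_pos_iff, norm_complexSqrt, radicand_zero]
    exact sqrt_pos.2 (norm_pos_iff.2 (Complex.ofReal_ne_zero.2 ht))
  have sqrt_ne_zero' : ((√(1 + t ^ 2) : ℝ) : ℂ) ≠ 0 := by
    have : 0 < 1 + t ^ 2 := by positivity
    exact_mod_cast (sqrt_pos.2 this).ne'
  have sqrt_tendsto : Tendsto (fun ε => Complex.sqrt (radicand ε)) (𝓝[>] 0)
      (𝓝 (Complex.sqrt (radicand 0))) :=
    (continuousOn_complexSqrt _ (im_nonneg le_rfl)).tendsto.comp radicand_tendsto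
  have limit : Tendsto (fun ε : ℝ => ellipticKernel (ε + κ * Complex.I) t) (𝓝[>] 0)
      (𝓝 (ellipticKernel ((0 : ℝ) + κ * Complex.I) t)) :=
    tendsto_const_nhds.div (sqrt_tendsto.const_mul _) (mul_ne_zero sqrt_ne_zero' sqrt_ne_zero)
  rwa [Complex.ofReal_zero, zero_add] at limit

theorem tendsto_complexComplEllipticK_nhdsGT :
    Tendsto (fun ε : ℝ => complexComplEllipticK (ε + κ * Complex.I)) (𝓝[>] 0)
      (𝓝 (complexComplEllipticK (κ * Complex.I))) := by
  refine tendsto_integral_filter_of_dominated_convergence (fun t => κ * boundaryKernel κ (κ * t))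
    (.of_forall fun ε => (measurable_ellipticKernel _).aestronglyMeasurable)
    (.of_forall fun ε => ae_restrict_of_ae (ae_norm_ellipticKernel_le hκ fun t => ?_))
    (integrableOn_mul_boundaryKernel_mul hκ) (ae_restrict_of_ae ?_)
  · simpa using abs_one_sub_im_sq_mul_sq_le (ε + κ * Complex.I) t
  · filter_upwards [ae_one_sub_sq_mul_sq_ne_zero hκ.ne'] with t ht
    exact tendsto_ellipticKernel_nhdsGT hκ ht

theorem inv_smul_ellipticKernel_mul_I (s : ℝ) :
    κ⁻¹ • ellipticKernel (κ * Complex.I) (κ⁻¹ * s)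
      = 1 / ((√(κ ^ 2 + s ^ 2) : ℝ) * Complex.sqrt ((1 - s ^ 2 : ℝ) : ℂ)) := by
  have radicand : 1 + (κ * Complex.I) ^ 2 * ((κ⁻¹ * s : ℝ) : ℂ) ^ 2 = ((1 - s ^ 2 : ℝ) : ℂ) := by
    have : (κ : ℂ) ≠ 0 := Complex.ofReal_ne_zero.2 hκ.ne'
    push_cast
    rw [mul_pow, Complex.I_sq]
    field_simp
    ring
  have scale : √(κ ^ 2 + s ^ 2) = κ * √(1 + (κ⁻¹ * s) ^ 2) := by
    rw [← sqrt_sq hκ.le, ← sqrt_mul (sq_nonneg _), sqrt_sq hκ.le]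
    congr 1
    field_simp
  rw [ellipticKernel, radicand, scale, Complex.real_smul, Complex.ofReal_inv, Complex.ofReal_mul,
    mul_assoc, one_div, one_div, mul_inv (κ : ℂ)]

omit hκ in
theorem one_div_mul_complexSqrt_of_lt_one {s : ℝ} (hs : s ∈ Ioo 0 1) :
    1 / ((√(κ ^ 2 + s ^ 2) : ℝ) * Complex.sqrt ((1 - s ^ 2 : ℝ) : ℂ)) = boundaryKernel κ s := by
  have radicand_pos : 0 < 1 - s ^ 2 := by nlinarith [hs.1, hs.2]
  rw [boundaryKernel, complexSqrt_ofReal radicand_pos.le, abs_of_pos radicand_pos,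
    sqrt_mul (by positivity)]
  push_cast
  rfl

omit hκ in
theorem one_div_mul_complexSqrt_of_one_lt {s : ℝ} (hs : s ∈ Ioi 1) :
    1 / ((√(κ ^ 2 + s ^ 2) : ℝ) * Complex.sqrt ((1 - s ^ 2 : ℝ) : ℂ))
      = -Complex.I * boundaryKernel κ s := by
  have radicand_neg : 1 - s ^ 2 < 0 := by nlinarith [mem_Ioi.1 hs]
  rw [boundaryKernel, complexSqrt_ofReal_of_nonpos radicand_neg.le, abs_of_neg radicand_neg,
    sqrt_mul (by positivity), ← Complex.inv_I]
  push_cast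
  ring

theorem complexComplEllipticK_mul_I :
    complexComplEllipticK (κ * Complex.I) = boundaryRe κ - Complex.I * boundaryNegIm κ := by
  have integrable_left := IntegrableOn.congr_fun (integrableOn_Ioo_boundaryKernel hκ.ne').ofReal
    (fun s hs => (one_div_mul_complexSqrt_of_lt_one hs).symm) measurableSet_Ioo
  have integrable_right := IntegrableOn.congr_fun
    ((integrableOn_Ioi_one_boundaryKernel κ).ofReal.const_mul (-Complex.I))
    (fun s hs => (one_div_mul_complexSqrt_of_one_lt hs).symm) measurableSet_Ioi
  have rescaled := integral_comp_mul_left_Ioi' (ellipticKernel (κ * Complex.I)) 0 (inv_pos.2 hκ)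
  rw [mul_zero, ← MeasureTheory.integral_smul] at rescaled
  simp only [inv_smul_ellipticKernel_mul_I hκ] at rescaled
  rw [complexComplEllipticK, ← rescaled,
    setIntegral_Ioi_eq_add zero_le_one integrable_left integrable_right,
    setIntegral_congr_fun measurableSet_Ioo fun s hs => one_div_mul_complexSqrt_of_lt_one hs,
    setIntegral_congr_fun measurableSet_Ioi fun s hs => one_div_mul_complexSqrt_of_one_lt hs,
    MeasureTheory.integral_const_mul, integral_complex_ofReal, integral_complex_ofReal,
    integral_Ioo_boundaryKernel, integral_Ioi_one_boundaryKernel]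
  ring

theorem re_complexComplEllipticK_mul_I_pow_three :
    (complexComplEllipticK (κ * Complex.I) ^ 3).re
      = boundaryRe κ ^ 3 - 3 * (boundaryNegIm κ ^ 2 * boundaryRe κ) := by
  rw [complexComplEllipticK_mul_I hκ]
  simp only [pow_succ, pow_zero, one_mul, Complex.mul_re, Complex.mul_im, Complex.sub_re,
    Complex.sub_im, Complex.I_re, Complex.I_im, Complex.ofReal_re, Complex.ofReal_im]
  ring

end BoundaryValue

/-! ### The contour integral of `K' ^ 3` -/

theorem abs_re_integral_complexComplEllipticK_pow_three_le {ε T : ℝ} (hε : 0 < ε) (hT : ε ≤ T) :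
    |(∫ y in 0..T, complexComplEllipticK (ε + y * Complex.I) ^ 3).re|
      ≤ 2 * (T * boundaryMajorant T ^ 3) := by
  have T_pos : 0 < T := hε.trans_le hT
  have majorant_nonneg := boundaryMajorant_nonneg T
  refine (abs_re_integral_left_edge_le (f := fun c => complexComplEllipticK c ^ 3)
    (C := boundaryMajorant T ^ 3) hT T_pos.le (fun c hc => ?_)
    (fun x _ => ?_) (fun x _ => ?_) fun y _ => ?_).trans ?_
  · exact ((differentiableAt_complexComplEllipticK
      (hε.trans_le hc.1.1)).pow 3).differentiableWithinAt
  · have real : complexComplEllipticK x = (complexComplEllipticK x).re :=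
      Complex.ext rfl (im_complexComplEllipticK_ofReal x)
    rw [real, ← Complex.ofReal_pow, Complex.ofReal_im]
  · rw [norm_pow]
    gcongr
    exact norm_complexComplEllipticK_add_mul_I_le T_pos x
  · have le_norm : T ≤ ‖(T : ℂ) + y * Complex.I‖ := by
      simpa using (le_abs_self _).trans (Complex.abs_re_le_norm ((T : ℂ) + y * Complex.I))
    rw [norm_pow]
    gcongr
    exact norm_complexComplEllipticK_le_of_le_norm T_pos le_norm
  · nlinarith [pow_nonneg majorant_nonneg 3]

theorem continuous_complexComplEllipticK_vertical {ε : ℝ} (hε : 0 < ε) :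
    Continuous fun y : ℝ => complexComplEllipticK (ε + y * Complex.I) :=
  continuous_iff_continuousAt.2 fun y =>
    ContinuousAt.comp (f := fun y : ℝ => (ε : ℂ) + y * Complex.I)
      (differentiableAt_complexComplEllipticK (by simpa using hε)).continuousAt (by fun_prop)

theorem abs_integral_re_boundary_pow_three_le {T : ℝ} (hT : 0 < T) :
    |∫ y in 0..T, (boundaryRe y ^ 3 - 3 * (boundaryNegIm y ^ 2 * boundaryRe y))|
      ≤ 2 * (T * boundaryMajorant T ^ 3) := by
  have majorant_integrable : IntervalIntegrable (fun y => boundaryMajorant y ^ 3) volume 0 T :=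
    (intervalIntegrable_iff_integrableOn_Ioc_of_le hT.le).2
      (integrableOn_boundaryMajorant_pow_three.mono_set fun _ hy => hy.1)
  have left_edge_tendsto : Tendsto
      (fun ε : ℝ => ∫ y in 0..T, (complexComplEllipticK (ε + y * Complex.I) ^ 3).re) (𝓝[>] 0)
      (𝓝 (∫ y in 0..T, (boundaryRe y ^ 3 - 3 * (boundaryNegIm y ^ 2 * boundaryRe y)))) := by
    refine intervalIntegral.tendsto_integral_filter_of_dominated_convergence
      (fun y => boundaryMajorant y ^ 3) ?_ (.of_forall fun ε => .of_forall fun y hy => ?_)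
      majorant_integrable (.of_forall fun y hy => ?_)
    · filter_upwards [self_mem_nhdsWithin] with ε hε
      exact (Complex.continuous_re.comp
        ((continuous_complexComplEllipticK_vertical hε).pow 3)).aestronglyMeasurable
    · rw [uIoc_of_le hT.le] at hy
      refine (Complex.abs_re_le_norm _).trans ?_
      rw [norm_pow]
      gcongr
      exact norm_complexComplEllipticK_add_mul_I_le hy.1 ε
    · rw [uIoc_of_le hT.le] at hy
      rw [← re_complexComplEllipticK_mul_I_pow_three hy.1]
      exact (Complex.continuous_re.tendsto _).comp
        ((tendsto_complexComplEllipticK_nhdsGT hy.1).pow 3)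
  refine le_of_tendsto left_edge_tendsto.abs ?_
  filter_upwards [Ioo_mem_nhdsGT hT] with ε hε
  have re_comm := Complex.reCLM.intervalIntegral_comp_comm
    (((continuous_complexComplEllipticK_vertical hε.1).pow 3).intervalIntegrable
      (μ := volume) 0 T)
  simp only [Complex.reCLM_apply, Pi.pow_apply] at re_comm
  rw [re_comm]
  exact abs_re_integral_complexComplEllipticK_pow_three_le hε.1 hε.2.le

theorem ellipticMoment_zero_three_zero_eq_three_mul :
    ellipticMoment 0 3 0 = 3 * ellipticMoment 2 1 0 := by
  have integrable_re_cube :=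
    integrableOn_boundaryNegIm_pow_mul_boundaryRe_pow (a := 0) (b := 3) rfl
  have integrable_mixed :=
    (integrableOn_boundaryNegIm_pow_mul_boundaryRe_pow (a := 2) (b := 1) rfl).const_mul 3
  have truncated_tendsto := (intervalIntegral_tendsto_integral_Ioi 0
    (integrable_re_cube.sub integrable_mixed) tendsto_id).abs
  simp only [Pi.sub_apply, pow_zero, one_mul, pow_one, id] at truncated_tendsto
  have bound_tendsto := tendsto_mul_boundaryMajorant_pow_three.const_mul 2
  rw [mul_zero] at bound_tendsto
  have integral_eq_zero := abs_nonpos_iff.1 <|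
    le_of_tendsto_of_tendsto truncated_tendsto bound_tendsto <|
      (eventually_gt_atTop 0).mono fun T hT => abs_integral_re_boundary_pow_three_le hT
  simp only [pow_zero, one_mul, pow_one] at integrable_re_cube integrable_mixed
  rw [MeasureTheory.integral_sub integrable_re_cube integrable_mixed,
    MeasureTheory.integral_const_mul, sub_eq_zero] at integral_eq_zero
  simpa only [ellipticMoment_zero_eq_setIntegral_boundary (zero_add 3),
    ellipticMoment_zero_eq_setIntegral_boundary (a := 2) (b := 1) rfl, pow_zero, one_mul, pow_one]
    using integral_eq_zero

end

theorem stmt_16 :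
    (∫ k in (0:ℝ)..1, (ellipticK (Real.sqrt (1-k^2)))^3)
        = (Real.Gamma (1/4))^8 / (128 * π^2) ∧
    (10/3) * (∫ k in (0:ℝ)..1, (ellipticK k)^3)
        = (Real.Gamma (1/4))^8 / (128 * π^2) ∧
    5 * (∫ k in (0:ℝ)..1, (ellipticK k)^3 * k)
        = (Real.Gamma (1/4))^8 / (128 * π^2) ∧
    3 * (∫ k in (0:ℝ)..1, (ellipticK k)^2 * ellipticK (Real.sqrt (1-k^2)))
        = (Real.Gamma (1/4))^8 / (128 * π^2) ∧
    2 * (∫ k in (0:ℝ)..1, ellipticK k * (ellipticK (Real.sqrt (1-k^2)))^2)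
        = (Real.Gamma (1/4))^8 / (128 * π^2) ∧
    6 * (∫ k in (0:ℝ)..1, (ellipticK k)^2 * ellipticK (Real.sqrt (1-k^2)) * k)
        = (Real.Gamma (1/4))^8 / (128 * π^2) := by
  have value := ellipticMoment_zero_three_zero
  have cauchy := ellipticMoment_zero_three_zero_eq_three_mul
  have landen_03 := two_pow_mul_ellipticMoment (zero_add 3)
  have landen_30 := two_pow_mul_ellipticMoment (add_zero 3)
  have landen_12 := two_pow_mul_ellipticMoment (a := 1) (b := 2) rfl
  have landen_21 := two_pow_mul_ellipticMoment (a := 2) (b := 1) rfl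
  have swap_30 := ellipticMoment_one_comm 3 0
  have swap_21 := ellipticMoment_one_comm 2 1
  simp only [ellipticMoment, pow_zero, pow_one, one_mul, mul_one] at *
  refine ⟨?_, ?_, ?_, ?_, ?_, ?_⟩ <;> linarith
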